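/- arXiv:1605.08204 — 5 statements merged into one kernel-verified Lean document; each statement's English description precedes it below -/
import Mathlib

section
/- Let R be the ring of infinitely differentiable functions ℝ → ℝ (the subalgebra of ℝ → ℝ consisting of functions that are ContDiff of every order, with pointwise operations), and let I be the ideal of R generated by the identity function x ↦ x. Let f : ℝ → ℝ be defined by f(x) = exp(−1/x) for x > 0 and f(x) = 0 for x ≤ 0. Then f ∈ R, f ≠ 0, and f ∈ Iⁿ for every n ≥ 1; in particular ki(I) := ⋂_{n=1}^∞ Iⁿ ≠ {0}. -/
set_option synthInstance.maxHeartbeats 400000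
set_option maxHeartbeats 800000

/-- The Krull intersection of an ideal `I`: the intersection `⋂_{n=1}^∞ Iⁿ`. -/
def ki {R : Type*} [CommRing R] (I : Ideal R) : Ideal R :=
  ⨅ (n : ℕ) (_ : 1 ≤ n), I ^ n

/-- The ring `C^∞(ℝ)` of infinitely differentiable functions `ℝ → ℝ`, as a subalgebra of
`ℝ → ℝ` (with pointwise operations) consisting of the functions that are `ContDiff` of
every (finite) order. -/
def SmoothFns : Subalgebra ℝ (ℝ → ℝ) where
  carrier := {f | ∀ n : ℕ, ContDiff ℝ n f}
  mul_mem' := fun hf hg n => (hf n).mul (hg n)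
  add_mem' := fun hf hg n => (hf n).add (hg n)
  algebraMap_mem' := fun _ _ => contDiff_const

/-- The identity function `x ↦ x` as an element of `C^∞(ℝ)`. -/
def idSmooth : SmoothFns := ⟨fun x => x, fun _ => contDiff_id⟩

/-- The function `f(x) = exp(-1/x)` for `x > 0`, and `f(x) = 0` for `x ≤ 0`. -/
noncomputable def fGlue : ℝ → ℝ := fun x => if 0 < x then Real.exp (-1 / x) else 0

/-!
Multiplying `exp (-1 / x)` by a polynomial in `1 / x` does not destroy smoothness at the origin, so
`f` can be divided by `x ^ n` within `C^∞(ℝ)` for every `n`. As `I` is principal, this divisibility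
is membership in `I ^ n`, and `f` itself is a nonzero element of `ki I`.
-/

open Polynomial

theorem mem_ki_span_singleton {R : Type*} [CommRing R] {a x : R} :
    x ∈ ki (Ideal.span {a}) ↔ ∀ n : ℕ, 1 ≤ n → a ^ n ∣ x := by
  simp only [ki, Ideal.mem_iInf, Ideal.span_singleton_pow, Ideal.mem_span_singleton]

theorem idSmooth_pow_dvd_of_inv_pow_mul_mem {f : SmoothFns} {n : ℕ} (hf_zero : f.1 0 = 0)
    (hf_div : (fun x : ℝ => x⁻¹ ^ n * f.1 x) ∈ SmoothFns) : idSmooth ^ n ∣ f := by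
  refine ⟨⟨_, hf_div⟩, Subtype.ext <| funext fun x => ?_⟩
  change f.1 x = x ^ n * (x⁻¹ ^ n * f.1 x)
  rcases eq_or_ne x 0 with rfl | hx
  · rw [hf_zero, mul_zero, mul_zero]
  · rw [inv_pow, mul_inv_cancel_left₀ (pow_ne_zero n hx)]

theorem fGlue_eq_expNegInvGlue : fGlue = expNegInvGlue := by
  funext x
  rcases le_or_gt x 0 with hx | hx
  · rw [fGlue, if_neg hx.not_gt, expNegInvGlue.zero_of_nonpos hx]
  · rw [fGlue, if_pos hx, expNegInvGlue, if_neg hx.not_ge, neg_div, one_div]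

theorem fGlue_zero : fGlue 0 = 0 :=
  if_neg (lt_irrefl 0)

theorem fGlue_ne_zero : fGlue ≠ 0 :=
  Function.ne_iff.2 ⟨1, by simp [fGlue]⟩

theorem polynomial_eval_inv_mul_fGlue_mem_smoothFns (p : ℝ[X]) :
    (fun x => p.eval x⁻¹ * fGlue x) ∈ SmoothFns := fun n => by
  rw [fGlue_eq_expNegInvGlue]
  exact expNegInvGlue.contDiff_polynomial_eval_inv_mul (n := n) p

theorem fGlue_mem_smoothFns : fGlue ∈ SmoothFns := by
  simpa only [eval_one, one_mul] using polynomial_eval_inv_mul_fGlue_mem_smoothFns 1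

theorem idSmooth_pow_dvd_fGlue (hf : fGlue ∈ SmoothFns) (n : ℕ) :
    idSmooth ^ n ∣ (⟨fGlue, hf⟩ : SmoothFns) := by
  refine idSmooth_pow_dvd_of_inv_pow_mul_mem fGlue_zero ?_
  simpa only [eval_pow, eval_X] using polynomial_eval_inv_mul_fGlue_mem_smoothFns (X ^ n)

/-- `fGlue` is smooth, nonzero, and belongs to `Iⁿ` for every `n ≥ 1`, where `I` is the ideal
of `C^∞(ℝ)` generated by the identity function; in particular `ki(I) ≠ {0}`. -/
theorem fGlue_mem_powers :
    fGlue ∈ SmoothFns ∧ fGlue ≠ (0 : ℝ → ℝ) ∧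
    (∀ (hf : fGlue ∈ SmoothFns) (n : ℕ), 1 ≤ n →
      (⟨fGlue, hf⟩ : SmoothFns) ∈ (Ideal.span {idSmooth} : Ideal SmoothFns) ^ n) ∧
    ki (Ideal.span {idSmooth} : Ideal SmoothFns) ≠ ⊥ := by
  refine ⟨fGlue_mem_smoothFns, fGlue_ne_zero, fun hf n _ => ?_, fun h_bot => ?_⟩
  · rw [Ideal.span_singleton_pow, Ideal.mem_span_singleton]
    exact idSmooth_pow_dvd_fGlue hf n
  · have h_mem : (⟨fGlue, fGlue_mem_smoothFns⟩ : SmoothFns) ∈ ki (Ideal.span {idSmooth}) :=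
      mem_ki_span_singleton.2 fun n _ => idSmooth_pow_dvd_fGlue fGlue_mem_smoothFns n
    rw [h_bot, Ideal.mem_bot] at h_mem
    exact fGlue_ne_zero (congrArg Subtype.val h_mem)
end

section
/- An ideal M of the polynomial ring ℂ[z₁, z₂, z₃, …] in countably many indeterminates over ℂ is maximal if and only if there exists a sequence of complex numbers ζ : ℕ → ℂ such that M is the ideal generated by the set {z_n − ζ_n : n ∈ ℕ}. -/
open MvPolynomial

/-!
The ideal of `k[X i | i ∈ σ]` generated by the `X i - x i` is the kernel of evaluation at `x`, hence
maximal. Conversely, let `M` be maximal with residue field `K`. A `t : K` transcendental over `k`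
would give `#k` linearly independent elements `(t - a)⁻¹`, `a ∈ k`, whereas the monomials span `K`,
so its dimension is at most `#σ` if `σ` is infinite. Therefore `#σ < #k` forces `K` to be algebraic
over `k` (for finite `σ` this is Zariski's lemma). If `k` is algebraically closed, then `K = k`, and
the classes of the `X i` in `K` are the coordinates of the point sought.
-/

universe u v

section EvaluationIdeal

variable {R : Type u} {σ : Type v} [CommRing R]

theorem sub_C_eval_mem_span_X_sub_C (x : σ → R) (p : MvPolynomial σ R) :
    p - C (eval x p) ∈ Ideal.span (Set.range fun i => X i - C (x i)) := by
  set I := Ideal.span (Set.range fun i => X i - C (x i))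
  have mk_X (i : σ) : Ideal.Quotient.mk I (X i) = Ideal.Quotient.mk I (C (x i)) :=
    Ideal.Quotient.eq.mpr (Ideal.subset_span (Set.mem_range_self i))
  have mk_eq_eval : Ideal.Quotient.mkₐ R I = (Algebra.ofId R _).comp (aeval x) := by
    ext i
    rw [AlgHom.comp_apply, aeval_X]
    exact mk_X i
  exact Ideal.Quotient.eq.mp (DFunLike.congr_fun mk_eq_eval p)

theorem span_X_sub_C_eq_ker_eval (x : σ → R) :
    Ideal.span (Set.range fun i => X i - C (x i)) = RingHom.ker (eval x) := by
  apply le_antisymm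
  · rw [Ideal.span_le]
    rintro _ ⟨i, rfl⟩
    simp
  · intro p hp
    simpa [RingHom.mem_ker.mp hp] using sub_C_eval_mem_span_X_sub_C x p

theorem isMaximal_span_X_sub_C {k : Type u} [Field k] (x : σ → k) :
    (Ideal.span (Set.range fun i => X i - C (x i))).IsMaximal := by
  rw [span_X_sub_C_eq_ker_eval]
  exact RingHom.ker_isMaximal_of_surjective _ fun a => ⟨C a, eval_C a⟩

end EvaluationIdeal

section ResidueField

open Cardinal

theorem isAlgebraic_of_rank_lt_mk {F : Type u} {E : Type v} [Field F] [Field E] [Algebra F E]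
    (h : lift.{u} (Module.rank F E) < lift.{v} #F) : Algebra.IsAlgebraic F E := by
  refine ⟨fun t => ?_⟩
  by_contra ht
  have mk_le_rank : lift.{v} #F ≤ lift.{u} (Module.rank F E) :=
    Transcendental.linearIndependent_sub_inv ht |>.cardinal_lift_le_rank
  exact mk_le_rank.not_gt h

theorem rank_mvPolynomial_quotient_le {R : Type u} {σ : Type v} [CommRing R] [Nontrivial R]
    [Infinite σ] (I : Ideal (MvPolynomial σ R)) :
    Module.rank R (MvPolynomial σ R ⧸ I) ≤ lift.{u} #σ :=
  calc
    Module.rank R (MvPolynomial σ R ⧸ I) ≤ Module.rank R (MvPolynomial σ R) :=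
      LinearMap.rank_le_of_surjective (Ideal.Quotient.mkₐ R I).toLinearMap
        (Ideal.Quotient.mkₐ_surjective R I)
    _ = lift.{u} #(σ →₀ ℕ) := MvPolynomial.rank_eq_lift
    _ = lift.{u} #σ := by rw [mk_finsupp_nat, max_eq_left (aleph0_le_mk σ)]

variable {k : Type u} {σ : Type v} [Field k]

theorem isAlgebraic_mvPolynomial_quotient_of_mk_lt (h : lift.{u} #σ < lift.{v} #k)
    (M : Ideal (MvPolynomial σ k)) [M.IsMaximal] :
    Algebra.IsAlgebraic k (MvPolynomial σ k ⧸ M) := by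
  let := Ideal.Quotient.field M
  obtain _ | _ := finite_or_infinite σ
  · have : Module.Finite k (MvPolynomial σ k ⧸ M) := finite_of_finite_type_of_isJacobsonRing _ _
    infer_instance
  · apply isAlgebraic_of_rank_lt_mk
    rw [lift_id'.{u, v}, lift_umax.{u, v}]
    exact (rank_mvPolynomial_quotient_le M).trans_lt h

theorem exists_eq_span_X_sub_C_of_isAlgebraic_quotient [IsAlgClosed k]
    (M : Ideal (MvPolynomial σ k)) [hM : M.IsMaximal]
    [Algebra.IsAlgebraic k (MvPolynomial σ k ⧸ M)] :
    ∃ x : σ → k, M = Ideal.span (Set.range fun i => X i - C (x i)) := by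
  have algebraMap_surjective : Function.Surjective (algebraMap k (MvPolynomial σ k ⧸ M)) :=
    IsAlgClosed.algebraMap_bijective_of_isIntegral.surjective
  choose x hx using fun i => algebraMap_surjective (Ideal.Quotient.mk M (X i))
  refine ⟨x, ((isMaximal_span_X_sub_C x).eq_of_le hM.ne_top ?_).symm⟩
  rw [Ideal.span_le]
  rintro _ ⟨i, rfl⟩
  exact Ideal.Quotient.eq.mp (hx i).symm

theorem maximal_iff_span_sub_const_general [IsAlgClosed k] (h : lift.{u} #σ < lift.{v} #k)
    (M : Ideal (MvPolynomial σ k)) :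
    M.IsMaximal ↔ ∃ x : σ → k, M = Ideal.span (Set.range fun i => X i - C (x i)) := by
  constructor
  · intro hM
    have := isAlgebraic_mvPolynomial_quotient_of_mk_lt h M
    exact exists_eq_span_X_sub_C_of_isAlgebraic_quotient M
  · rintro ⟨x, rfl⟩
    exact isMaximal_span_X_sub_C x

end ResidueField

/-- An ideal `M` of the polynomial ring `ℂ[z₁, z₂, z₃, …]` in countably many indeterminates
over `ℂ` is maximal if and only if there is a sequence `ζ : ℕ → ℂ` of complex numbers such
that `M` is the ideal generated by `{zₙ - ζₙ : n ∈ ℕ}`. -/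
theorem maximal_iff_span_sub_const (M : Ideal (MvPolynomial ℕ ℂ)) :
    M.IsMaximal ↔
      ∃ ζ : ℕ → ℂ, M = Ideal.span (Set.range fun n : ℕ => (X n : MvPolynomial ℕ ℂ) - C (ζ n)) :=
  maximal_iff_span_sub_const_general (by simpa using Cardinal.aleph0_lt_continuum) M
end

section
/- For every proper ideal I of the polynomial ring ℂ[z₁, z₂, z₃, …] in countably many indeterminates over ℂ, the Krull intersection is trivial: ⋂_{n=1}^∞ Iⁿ = {0}. -/
/-!
Let `B = R[z] / I` and let `aᵢ ∈ B` be the class of `zᵢ`. Expanding polynomials over `B` around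
the tautological zero `a` of `I` gives a homomorphism `R[z] → B[z]`, `zᵢ ↦ zᵢ + aᵢ`, under which
`I` lands in the ideal of polynomials without constant term. The powers of that ideal intersect
trivially, for degree reasons, so the Krull intersection of `I` lies in the kernel. As translation
by `a` is invertible, the kernel is generated by `I ∩ R`, which vanishes when `R` is a field and
`I` is proper.
-/

open MvPolynomial

section KrullIntersection

variable {R S : Type*} [CommRing R] [CommRing S]

lemma mem_ki {I : Ideal R} {x : R} : x ∈ ki I ↔ ∀ n, 1 ≤ n → x ∈ I ^ n := by
  simp only [ki, Submodule.mem_iInf]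

lemma ki_le_comap_ki {f : R →+* S} {I : Ideal R} {J : Ideal S} (h : I ≤ J.comap f) :
    ki I ≤ (ki J).comap f := fun _ hx ↦
  mem_ki.mpr fun n hn ↦
    ((Ideal.pow_right_mono h n).trans (Ideal.le_comap_pow f n)) (mem_ki.mp hx n hn)

end KrullIntersection

section Translation

variable {σ R : Type*} [CommRing R]

/-- The translation `p(z) ↦ p(z + a)` of polynomials, as an `R`-algebra automorphism. -/
noncomputable def translateEquiv (a : σ → R) : MvPolynomial σ R ≃ₐ[R] MvPolynomial σ R :=
  AlgEquiv.ofAlgHom (aeval fun i ↦ X i + C (a i)) (aeval fun i ↦ X i - C (a i))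
    (by ext; simp) (by ext; simp)

lemma constantCoeff_translateEquiv (a : σ → R) (p : MvPolynomial σ R) :
    constantCoeff (translateEquiv a p) = eval a p := by
  induction p using MvPolynomial.induction_on <;> simp_all [translateEquiv]

end Translation

section IdealOfVars

variable {σ R : Type*}

lemma mem_idealOfVars_iff_constantCoeff_eq_zero [CommSemiring R] {p : MvPolynomial σ R} :
    p ∈ idealOfVars σ R ↔ constantCoeff p = 0 := by
  rw [← pow_one (idealOfVars σ R), mem_pow_idealOfVars_iff']
  simp [constantCoeff_eq, Finsupp.degree_eq_zero_iff]

lemma ki_idealOfVars [CommRing R] : ki (idealOfVars σ R) = ⊥ := by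
  refine eq_bot_iff.mpr fun p hp ↦ Ideal.mem_bot.mpr (MvPolynomial.ext _ _ fun m ↦ ?_)
  have hpm : p ∈ idealOfVars σ R ^ (m.degree + 1) := mem_ki.mp hp _ m.degree.succ_pos
  exact (mem_pow_idealOfVars_iff' _ _).mp hpm m m.degree.lt_succ_self

end IdealOfVars

section Expansion

variable {σ R B : Type*} [CommRing R] [CommRing B] (q : MvPolynomial σ R →+* B)

/-- The expansion `p(z) ↦ p(z + a)` of polynomials around the `B`-valued point `a = (q zᵢ)ᵢ`. The
homomorphism `q : R[z] → B` encodes both `a` and the structure map `R → B`. -/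
noncomputable def expandAt : MvPolynomial σ R →+* MvPolynomial σ B :=
  (translateEquiv fun i ↦ q (X i)).toRingHom.comp (map (q.comp C))

lemma constantCoeff_expandAt (p : MvPolynomial σ R) : constantCoeff (expandAt q p) = q p := by
  calc constantCoeff (expandAt q p)
      = eval (fun i ↦ q (X i)) (map (q.comp C) p) := constantCoeff_translateEquiv _ _
    _ = q (eval₂ C X p) := by rw [eval_map, hom_eval₂]
    _ = q p := by rw [eval₂_eta]

lemma ker_le_comap_expandAt_idealOfVars :
    RingHom.ker q ≤ (idealOfVars σ B).comap (expandAt q) := fun p hp ↦ by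
  rwa [Ideal.mem_comap, mem_idealOfVars_iff_constantCoeff_eq_zero, constantCoeff_expandAt]

lemma ker_expandAt : RingHom.ker (expandAt q) = ((RingHom.ker q).comap C).map C := by
  calc RingHom.ker (expandAt q)
      = RingHom.ker (map (σ := σ) (q.comp C)) :=
        RingHom.ker_comp_of_injective _ (AlgEquiv.injective _)
    _ = (RingHom.ker (q.comp C)).map C := ker_map _
    _ = ((RingHom.ker q).comap C).map C := by rw [RingHom.comap_ker]

lemma ki_ker_le_map_comap_C : ki (RingHom.ker q) ≤ ((RingHom.ker q).comap C).map C := by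
  calc ki (RingHom.ker q)
      ≤ (ki (idealOfVars σ B)).comap (expandAt q) :=
        ki_le_comap_ki (ker_le_comap_expandAt_idealOfVars q)
    _ = RingHom.ker (expandAt q) := by rw [ki_idealOfVars, RingHom.ker_eq_comap_bot]
    _ = ((RingHom.ker q).comap C).map C := ker_expandAt q

theorem ki_le_map_comap_C (I : Ideal (MvPolynomial σ R)) : ki I ≤ (I.comap C).map C := by
  simpa only [Ideal.mk_ker] using ki_ker_le_map_comap_C (Ideal.Quotient.mk I)

lemma comap_C_eq_bot_of_ne_top {K : Type*} [Field K] {I : Ideal (MvPolynomial σ K)}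
    (hI : I ≠ ⊤) : I.comap C = ⊥ :=
  (Ideal.eq_bot_or_top _).resolve_right (Ideal.comap_ne_top C hI)

theorem ki_eq_bot_of_proper_general (I : Ideal (MvPolynomial σ R)) (hI : I.comap C = ⊥) :
    ki I = ⊥ :=
  le_bot_iff.mp <| by simpa only [hI, Ideal.map_bot] using ki_le_map_comap_C I

end Expansion

/-- For every proper ideal `I` of the polynomial ring `ℂ[z₁, z₂, z₃, …]` in countably many
indeterminates over `ℂ`, the Krull intersection `⋂_{n=1}^∞ Iⁿ` is trivial. -/
theorem ki_eq_bot_of_proper (I : Ideal (MvPolynomial ℕ ℂ)) (hI : I ≠ ⊤) :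
    ki I = ⊥ :=
  ki_eq_bot_of_proper_general I (comap_C_eq_bot_of_ne_top hI)
end

section
/- Let D be a domain in ℂ and let M be a maximal ideal in the ring H(D). If f ∈ M and h ∈ H(D) is such that Z_D(f) ⊆ Z_D(h) (zero sets disregarding multiplicities), then h ∈ M. -/
set_option synthInstance.maxHeartbeats 400000
set_option maxHeartbeats 800000

/-- The ring `H(D)` of holomorphic functions on a set `D ⊆ ℂ`, realized as the subalgebra of
`D → ℂ` (with pointwise operations) of functions admitting a holomorphic (complex
differentiable) extension to (an ambient function on) `D`. -/
def Hol (D : Set ℂ) : Subalgebra ℂ (D → ℂ) where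
  carrier := {f | ∃ F : ℂ → ℂ, DifferentiableOn ℂ F D ∧ ∀ z : D, F z = f z}
  add_mem' := by
    rintro f g ⟨F, hF, hFf⟩ ⟨G, hG, hGg⟩
    exact ⟨F + G, hF.add hG, fun z => by simp [hFf z, hGg z]⟩
  mul_mem' := by
    rintro f g ⟨F, hF, hFf⟩ ⟨G, hG, hGg⟩
    exact ⟨F * G, hF.mul hG, fun z => by simp [hFf z, hGg z]⟩
  algebraMap_mem' := fun c => ⟨fun _ => c, differentiableOn_const c, fun _ => rfl⟩

/-- The zero set `Z_D(f) = {z ∈ D : f(z) = 0}` of `f ∈ H(D)`. -/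
def ZD {D : Set ℂ} (f : Hol D) : Set D := {z | (f : D → ℂ) z = 0}

/-- `ordGE f ζ n` says that the order (multiplicity) of `ζ` as a zero of `f ∈ H(D)` is at
least `n`, expressed by the (equivalent, for `D` open) divisibility condition that
`(z - ζ)^n` divides `f` in `H(D)`. -/
def ordGE {D : Set ℂ} (f : Hol D) (ζ : D) (n : ℕ) : Prop :=
  ∃ g : Hol D, ∀ z : D, (f : D → ℂ) z = ((z : ℂ) - (ζ : ℂ)) ^ n * (g : D → ℂ) z

/-! If `Z(f) ⊆ Z(h)`, then `f` and `y * h + 1` have no common zero for any `y ∈ H(D)`. Two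
holomorphic functions `f` and `p` without common zeros generate the unit ideal: Mittag-Leffler's
theorem gives a `u` with the principal parts of `p⁻¹ / f`, so that `f * u` extends to a
holomorphic `B` congruent to `p⁻¹` modulo `f` at the zeros of `f`, and `1 - B * p` is divisible by
`f`. Hence `y * h + 1` is a unit modulo `f` for every `y`, that is, `h` lies in the Jacobson
radical of `(f)`, which is contained in every maximal ideal containing `f`.

For Mittag-Leffler's theorem on an arbitrary open set, the principal parts are made summable by
pole pushing: a polynomial in `(z - a)⁻¹` is approximated by polynomials in `(z - c)⁻¹` for a
nearby `c ∉ D`, or by polynomials in `z` when `a` is far from the complement of `D`. -/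

open Filter Topology Set Polynomial Metric

section PrincipalPart

variable {𝕜 : Type*} [NontriviallyNormedField 𝕜] {u v w : 𝕜 → 𝕜} {a : 𝕜}

/-- `u` and `v` have the same principal part at `a`: on a punctured neighbourhood of `a` they
differ by a function that is analytic at `a`. -/
def SamePrincipalPartAt (u v : 𝕜 → 𝕜) (a : 𝕜) : Prop :=
  ∃ ψ : 𝕜 → 𝕜, AnalyticAt 𝕜 ψ a ∧ u =ᶠ[𝓝[≠] a] v + ψ

namespace SamePrincipalPartAt

lemma symm (h : SamePrincipalPartAt u v a) : SamePrincipalPartAt v u a := by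
  obtain ⟨ψ, hψ, h⟩ := h
  exact ⟨-ψ, hψ.neg, h.mono fun z hz => by simp [hz]⟩

lemma trans (h₁ : SamePrincipalPartAt u v a) (h₂ : SamePrincipalPartAt v w a) :
    SamePrincipalPartAt u w a := by
  obtain ⟨ψ₁, hψ₁, h₁⟩ := h₁
  obtain ⟨ψ₂, hψ₂, h₂⟩ := h₂
  refine ⟨ψ₂ + ψ₁, hψ₂.add hψ₁, ?_⟩
  filter_upwards [h₁, h₂] with z hz₁ hz₂
  simp only [hz₁, hz₂, Pi.add_apply, add_assoc]

end SamePrincipalPartAt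

lemma exists_polynomial_samePrincipalPartAt_div_pow {φ : 𝕜 → 𝕜} (hφ : AnalyticAt 𝕜 φ a)
    (n : ℕ) :
    ∃ P : 𝕜[X], SamePrincipalPartAt (fun z => φ z / (z - a) ^ n) (fun z => P.eval (z - a)⁻¹) a := by
  induction n generalizing φ with
  | zero => exact ⟨0, φ, hφ, .of_forall fun z => by simp⟩
  | succ n ih =>
    obtain ⟨p, hp⟩ := hφ
    obtain ⟨P, ψ, hψ, hP⟩ := ih ⟨_, hp.has_fpower_series_dslope_fslope⟩
    refine ⟨P + C (φ a) * X ^ (n + 1), ψ, hψ, ?_⟩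
    filter_upwards [hP, self_mem_nhdsWithin] with z hz hza
    have hza' : z - a ≠ 0 := sub_ne_zero.2 hza
    calc φ z / (z - a) ^ (n + 1)
        = dslope φ a z / (z - a) ^ n + φ a * (z - a)⁻¹ ^ (n + 1) := by
          rw [dslope_of_ne _ hza, slope_def_field, inv_pow]
          field_simp
          ring
      _ = _ := by
          rw [hz]
          simp only [Pi.add_apply, eval_add, eval_mul, eval_C, eval_pow, eval_X]
          ring

lemma exists_polynomial_samePrincipalPartAt {f : 𝕜 → 𝕜} (hf : MeromorphicAt f a) :
    ∃ P : 𝕜[X], SamePrincipalPartAt f (fun z => P.eval (z - a)⁻¹) a := by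
  obtain ⟨n, hn⟩ := hf
  obtain ⟨P, ψ, hψ, hP⟩ := exists_polynomial_samePrincipalPartAt_div_pow hn n
  refine ⟨P, ψ, hψ, ?_⟩
  filter_upwards [hP, self_mem_nhdsWithin] with z hz hza
  rw [← hz, smul_eq_mul, mul_div_cancel_left₀ _ (pow_ne_zero n (sub_ne_zero.2 hza))]

end PrincipalPart

section Gluing

variable {𝕜 : Type*} [NontriviallyNormedField 𝕜]

lemma exists_analyticOnNhd_eventuallyEq {E : Type*} [NormedAddCommGroup E] [NormedSpace 𝕜 E]
    [CompleteSpace E] {D : Set 𝕜} {G : 𝕜 → E}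
    (hG : ∀ a ∈ D, ∃ g : 𝕜 → E, AnalyticAt 𝕜 g a ∧ G =ᶠ[𝓝[≠] a] g) :
    ∃ A : 𝕜 → E, AnalyticOnNhd 𝕜 A D ∧ ∀ a ∈ D, A =ᶠ[𝓝[≠] a] G := by
  have hmer : MeromorphicOn G D := fun a ha =>
    let ⟨_, hg, hGg⟩ := hG a ha
    hg.meromorphicAt.congr hGg.symm
  have hA : ∀ a ∈ D, toMeromorphicNFOn G D =ᶠ[𝓝[≠] a] G := fun a ha =>
    hmer.toMeromorphicNFOn_eq_self_on_nhdsNE ha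
  refine ⟨toMeromorphicNFOn G D, fun a ha => ?_, hA⟩
  obtain ⟨g, hg, hGg⟩ := hG a ha
  rw [← (meromorphicNFOn_toMeromorphicNFOn G D ha).meromorphicOrderAt_nonneg_iff_analyticAt,
    meromorphicOrderAt_congr ((hA a ha).trans hGg)]
  exact hg.meromorphicOrderAt_nonneg

variable {D : Set 𝕜} {F : 𝕜 → 𝕜}

lemma exists_eqOn_mul_of_locally [CompleteSpace 𝕜] (hF : AnalyticOnNhd 𝕜 F D) {g : 𝕜 → 𝕜}
    (hg : AnalyticOnNhd 𝕜 g D)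
    (hdvd : ∀ a ∈ D, F a = 0 → ∃ ψ : 𝕜 → 𝕜, AnalyticAt 𝕜 ψ a ∧ g =ᶠ[𝓝 a] F * ψ) :
    ∃ A : 𝕜 → 𝕜, AnalyticOnNhd 𝕜 A D ∧ EqOn g (F * A) D := by
  have hquot : ∀ a ∈ D, ∃ ψ : 𝕜 → 𝕜, AnalyticAt 𝕜 ψ a ∧ g / F =ᶠ[𝓝[≠] a] ψ := fun a ha => by
    by_cases hFa : F a = 0
    · obtain ⟨ψ, hψ, hgψ⟩ := hdvd a ha hFa
      rcases (hF a ha).eventually_eq_zero_or_eventually_ne_zero with h0 | h0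
      · refine ⟨0, analyticAt_const, .filter_mono ?_ nhdsWithin_le_nhds⟩
        filter_upwards [h0] with z hz
        simp [hz]
      · refine ⟨ψ, hψ, ?_⟩
        filter_upwards [hgψ.filter_mono nhdsWithin_le_nhds, h0] with z hz hFz
        rw [Pi.div_apply, hz, Pi.mul_apply, mul_div_cancel_left₀ _ hFz]
    · exact ⟨g / F, (hg a ha).div (hF a ha) hFa, .rfl⟩
  obtain ⟨A, hA, hAG⟩ := exists_analyticOnNhd_eventuallyEq hquot
  refine ⟨A, hA, fun a ha => ?_⟩
  rcases (hF a ha).eventually_eq_zero_or_eventually_ne_zero with h0 | h0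
  · obtain ⟨ψ, -, hgψ⟩ := hdvd a ha h0.self_of_nhds
    simp [hgψ.self_of_nhds, h0.self_of_nhds]
  · have heq : ∀ᶠ z in 𝓝[≠] a, g z = (F * A) z := by
      filter_upwards [hAG a ha, h0] with z hz hFz
      rw [Pi.mul_apply, hz, Pi.div_apply, mul_div_cancel₀ _ hFz]
    exact (((hg a ha).frequently_eq_iff_eventually_eq ((hF a ha).mul (hA a ha))).1
      heq.frequently).self_of_nhds

lemma compl_isolatedZeros_mem_codiscreteWithin (hF : AnalyticOnNhd 𝕜 F D) :
    {a | F a = 0 ∧ ∀ᶠ z in 𝓝[≠] a, F z ≠ 0}ᶜ ∈ codiscreteWithin D := by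
  refine mem_codiscreteWithin_iff_forall_mem_nhdsNE.2 fun a ha => ?_
  rcases (hF a ha).eventually_eq_zero_or_eventually_ne_zero with h0 | h0
  · filter_upwards [h0.eventually_nhds.filter_mono nhdsWithin_le_nhds] with z hz
    refine .inl fun h => ?_
    obtain ⟨w, hw, hw'⟩ := (h.2.and (hz.filter_mono nhdsWithin_le_nhds)).exists
    exact hw hw'
  · exact h0.mono fun z hz => .inl fun h => hz h.1

end Gluing

section Runge

/-- `f` is a uniform limit on `K` of functions that are holomorphic on `D`; no relation between
`K` and `D` is required. -/
def RungeApproximable (D K : Set ℂ) (f : ℂ → ℂ) : Prop :=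
  ∀ ε > 0, ∃ Q : ℂ → ℂ, AnalyticOnNhd ℂ Q D ∧ ∀ z ∈ K, ‖f z - Q z‖ ≤ ε

lemma exists_polynomial_norm_sub_le {g : ℂ → ℂ} {r ρ : ℝ} (hr : r < ρ)
    (hg : DifferentiableOn ℂ g (ball 0 ρ)) {ε : ℝ} (hε : 0 < ε) :
    ∃ P : ℂ[X], ∀ z ∈ ball (0 : ℂ) r, ‖g z - P.eval z‖ ≤ ε := by
  rcases le_or_gt r 0 with hr0 | hr0
  · exact ⟨0, by simp [ball_eq_empty.2 hr0]⟩
  obtain ⟨R, hrR, hRρ⟩ := exists_between hr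
  lift R to NNReal using (hr0.trans hrR).le
  lift r to NNReal using hr0.le
  have hp := (hg.mono (closedBall_subset_ball hRρ)).hasFPowerSeriesOnBall (hr0.trans hrR)
  have hlim := hp.tendstoUniformlyOn (ENNReal.coe_lt_coe.2 hrR)
  obtain ⟨n, hn⟩ := (tendstoUniformlyOn_iff.1 hlim ε hε).exists
  refine ⟨∑ k ∈ Finset.range n, C ((cauchyPowerSeries g 0 R).coeff k) * X ^ k, fun z hz => ?_⟩
  have hsum : (cauchyPowerSeries g 0 R).partialSum n z =
      (∑ k ∈ Finset.range n, C ((cauchyPowerSeries g 0 R).coeff k) * X ^ k).eval z := by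
    simp only [FormalMultilinearSeries.partialSum, FormalMultilinearSeries.apply_eq_pow_smul_coeff,
      smul_eq_mul, eval_finsetSum, eval_mul, eval_C, eval_pow, eval_X, mul_comm]
  simpa only [zero_add, dist_eq_norm, hsum] using (hn z hz).le

lemma rungeApproximable_comp {D K : Set ℂ} {g κ : ℂ → ℂ} {r ρ : ℝ} (hr : r < ρ)
    (hg : DifferentiableOn ℂ g (ball 0 ρ)) (hκ : AnalyticOnNhd ℂ κ D)
    (hκK : MapsTo κ K (ball 0 r)) : RungeApproximable D K (g ∘ κ) := fun ε hε => by
  obtain ⟨P, hP⟩ := exists_polynomial_norm_sub_le hr hg hε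
  exact ⟨fun z => P.eval (κ z), hκ.aeval_polynomial P, fun z hz => hP _ (hκK hz)⟩

lemma RungeApproximable.congr {D K : Set ℂ} {f g : ℂ → ℂ} (hf : RungeApproximable D K f)
    (hfg : EqOn f g K) : RungeApproximable D K g := fun ε hε =>
  (hf ε hε).imp fun _ hQ => ⟨hQ.1, fun z hz => hfg hz ▸ hQ.2 z hz⟩

lemma rungeApproximable_eval_inv_sub_ball (P : ℂ[X]) (D : Set ℂ) {a : ℂ} {r : ℝ} (hr : r < ‖a‖) :
    RungeApproximable D (ball 0 r) (fun z => P.eval (z - a)⁻¹) := by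
  have hg : DifferentiableOn ℂ (fun z => P.eval (z - a)⁻¹) (ball 0 ‖a‖) := by
    refine P.differentiable.comp_differentiableOn <|
      (differentiableOn_id.sub_const a).inv fun z hz => sub_ne_zero.2 ?_
    rintro rfl
    simp at hz
  exact rungeApproximable_comp hr hg analyticOnNhd_id (mapsTo_id _)

lemma rungeApproximable_eval_inv_sub_compl_closedBall (P : ℂ[X]) {D : Set ℂ} {a c : ℂ} (hc : c ∉ D)
    (hac : a ≠ c) :
    RungeApproximable D (closedBall c (2 * dist a c))ᶜ (fun z => P.eval (z - a)⁻¹) := by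
  have hpos : 0 < dist a c := dist_pos.2 hac
  have hg : DifferentiableOn ℂ (fun ζ => P.eval (ζ * (1 - (a - c) * ζ)⁻¹))
      (ball 0 (dist a c)⁻¹) := by
    refine P.differentiable.comp_differentiableOn <| differentiableOn_id.mul <|
      DifferentiableOn.inv (by fun_prop) fun ζ hζ h => ?_
    have hζ' : ‖(a - c) * ζ‖ < 1 := by
      rwa [mem_ball_zero_iff, ← one_div, lt_div_iff₀' hpos, dist_eq_norm, ← norm_mul] at hζ
    simp [← sub_eq_zero.1 h] at hζ'
  have hκ : AnalyticOnNhd ℂ (fun z => (z - c)⁻¹) D :=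
    (analyticOnNhd_id.sub analyticOnNhd_const).inv fun z hz =>
      sub_ne_zero.2 (ne_of_mem_of_not_mem hz hc)
  have hκK : MapsTo (fun z => (z - c)⁻¹) (closedBall c (2 * dist a c))ᶜ
      (ball 0 (2 * dist a c)⁻¹) := fun z hz => by
    rw [mem_ball_zero_iff, norm_inv, ← dist_eq_norm]
    exact inv_strictAnti₀ (by positivity) (by simpa using hz)
  have hr : (2 * dist a c)⁻¹ < (dist a c)⁻¹ := inv_strictAnti₀ hpos (by linarith)
  refine (rungeApproximable_comp hr hg hκ hκK).congr fun z hz => ?_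
  have hzc : z - c ≠ 0 := fun h => hz (by simp [sub_eq_zero.1 h])
  have hza : z - a = (z - c) * (1 - (a - c) * (z - c)⁻¹) := by field_simp; ring
  simp only [Function.comp_apply, hza, mul_inv]

end Runge

section MittagLeffler

variable {D : Set ℂ}

lemma exists_rungeApproximable_eval_inv_sub (hD : IsOpen D) {a : ℂ} (ha : a ∈ D) :
    ∃ L : Set ℂ, a ∉ L ∧ (∀ P : ℂ[X], RungeApproximable D L (fun z => P.eval (z - a)⁻¹)) ∧
      ∀ z₀ r, ball z₀ (2 * r) ⊆ D →
        a ∉ closedBall 0 (‖z₀‖ + r + 3) \ thickening (min 1 (r / 2)) Dᶜ → ball z₀ r ⊆ L := by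
  -- A pole at distance less than `1` from `Dᶜ` is pushed to a nearest point `c` of `Dᶜ`, any other
  -- pole to infinity; the constants make `ball z₀ r` avoid `closedBall c (2 * dist a c)` in the
  -- first case and lie in `ball 0 (‖a‖ - 1)` in the second.
  by_cases hnear : a ∈ thickening 1 Dᶜ
  · have hne : Dᶜ.Nonempty := (thickening_nonempty_iff_of_pos one_pos).1 ⟨a, hnear⟩
    obtain ⟨c, hc, hac⟩ := hD.isClosed_compl.exists_infDist_eq_dist hne a
    have hdist : ∀ δ, a ∈ thickening δ Dᶜ → dist a c < δ := fun δ h =>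
      hac ▸ (mem_thickening_iff_infDist_lt hne).1 h
    have hac_pos : 0 < dist a c := dist_pos.2 (ne_of_mem_of_not_mem ha hc)
    refine ⟨(closedBall c (2 * dist a c))ᶜ, not_not_intro (mem_closedBall.2 (by linarith)), fun P =>
      rungeApproximable_eval_inv_sub_compl_closedBall P hc (ne_of_mem_of_not_mem ha hc),
      fun z₀ r hr haK => (ball_disjoint_closedBall ?_).subset_compl_right⟩
    by_cases hthin : a ∈ thickening (min 1 (r / 2)) Dᶜ
    · have hcz₀ : 2 * r ≤ dist z₀ c := by
        by_contra! h
        exact hc (hr (mem_ball'.2 h))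
      linarith [(hdist _ hthin).trans_le (min_le_right _ _)]
    · have hfar : ‖z₀‖ + r + 3 < ‖a‖ := by
        by_contra! h
        exact haK ⟨mem_closedBall_zero_iff.2 h, hthin⟩
      have ha_le : ‖a‖ ≤ dist a c + dist z₀ c + ‖z₀‖ := by
        simpa only [dist_zero_right, dist_comm c z₀] using dist_triangle4 a c z₀ 0
      linarith [hdist 1 hnear]
  · refine ⟨ball 0 (‖a‖ - 1), by simp, fun P =>
      rungeApproximable_eval_inv_sub_ball P D (sub_one_lt _),
      fun z₀ r _ haK => ball_subset_ball' ?_⟩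
    have hfar : ‖z₀‖ + r + 3 < ‖a‖ := by
      by_contra! h
      exact haK ⟨mem_closedBall_zero_iff.2 h, fun hthin =>
        hnear (thickening_mono (min_le_left _ _) _ hthin)⟩
    linarith [dist_zero_right z₀]

lemma exists_rungeApproximable_eval_inv_sub_region (hD : IsOpen D) :
    ∃ L : ℂ → Set ℂ,
      (∀ a ∈ D, ∀ P : ℂ[X], RungeApproximable D (L a) (fun z => P.eval (z - a)⁻¹)) ∧
      ∀ z₀ ∈ D, ∃ U ⊆ D, IsOpen U ∧ z₀ ∈ U ∧
        ∃ K ⊆ D, IsCompact K ∧ ∀ a ∈ D \ K, a ∉ U ∧ U ⊆ L a := by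
  choose! L haL hL hball using fun a (ha : a ∈ D) => exists_rungeApproximable_eval_inv_sub hD ha
  refine ⟨L, hL, fun z₀ hz₀ => ?_⟩
  obtain ⟨s, hs, hsD⟩ := isOpen_iff.1 hD z₀ hz₀
  have hr : 0 < s / 2 := half_pos hs
  have hδ : 0 < min 1 (s / 2 / 2) := by positivity
  have hsD' : ball z₀ (2 * (s / 2)) ⊆ D := by rwa [mul_div_cancel₀ s two_ne_zero]
  refine ⟨ball z₀ (s / 2), (ball_subset_ball (half_le_self hs.le)).trans hsD, isOpen_ball,
    mem_ball_self hr, closedBall 0 (‖z₀‖ + s / 2 + 3) \ thickening (min 1 (s / 2 / 2)) Dᶜ,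
    fun a ha => ?_, (isCompact_closedBall _ _).diff isOpen_thickening, fun a ha => ?_⟩
  · by_contra haD
    exact ha.2 (self_subset_thickening hδ _ haD)
  · have hUL := hball a ha.1 z₀ (s / 2) hsD' ha.2
    exact ⟨fun haU => haL a ha.1 (hUL haU), hUL⟩

lemma exists_samePrincipalPartAt_norm_le {L : Set ℂ} {a : ℂ} {m : ℂ → ℂ}
    (hL : ∀ P : ℂ[X], RungeApproximable D L (fun z => P.eval (z - a)⁻¹)) (ha : a ∈ D)
    (hm : MeromorphicAt m a) {ε : ℝ} (hε : 0 < ε) :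
    ∃ T : ℂ → ℂ, AnalyticOnNhd ℂ T (D \ {a}) ∧ SamePrincipalPartAt T m a ∧
      ∀ z ∈ L, ‖T z‖ ≤ ε := by
  obtain ⟨P, hP⟩ := exists_polynomial_samePrincipalPartAt hm
  obtain ⟨Q, hQ, hPQ⟩ := hL P ε hε
  have hinv : AnalyticOnNhd ℂ (fun z => (z - a)⁻¹) (D \ {a}) :=
    (analyticOnNhd_id.sub analyticOnNhd_const).inv fun z hz => sub_ne_zero.2 hz.2
  refine ⟨fun z => P.eval (z - a)⁻¹ - Q z,
    (hinv.aeval_polynomial P).sub (hQ.mono sdiff_subset), .trans ?_ hP.symm, hPQ⟩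
  exact ⟨-Q, (hQ a ha).neg, .of_forall fun z => sub_eq_add_neg _ _⟩

lemma exists_tsum_eventuallyEq_sum_add {ι E : Type*} [NormedAddCommGroup E] [NormedSpace ℂ E]
    [CompleteSpace E] {T : ι → ℂ → E} {ε : ι → ℝ}
    (hε : Summable ε) {U : Set ℂ} (hU : IsOpen U) {z₀ : ℂ} (hz₀ : z₀ ∈ U) (F : Finset ι)
    (hT : ∀ i ∉ F, DifferentiableOn ℂ (T i) U) (hTε : ∀ i ∉ F, ∀ z ∈ U, ‖T i z‖ ≤ ε i) :
    ∃ v : ℂ → E, AnalyticAt ℂ v z₀ ∧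
      (fun z => ∑' i, T i z) =ᶠ[𝓝 z₀] (fun z => ∑ i ∈ F, T i z) + v := by
  have hε' : Summable fun i : {i // i ∉ F} => ε i := F.summable_compl_iff.2 hε
  have hv : DifferentiableOn ℂ (fun z => ∑' i : {i // i ∉ F}, T i z) U :=
    Complex.differentiableOn_tsum_of_summable_norm hε' (fun i => hT i i.2) hU
      fun i z hz => hTε i i.2 z hz
  refine ⟨_, hv.analyticAt (hU.mem_nhds hz₀), ?_⟩
  filter_upwards [hU.mem_nhds hz₀] with z hz
  have hsum : Summable fun i => T i z :=
    F.summable_compl_iff.1 (.of_norm_bounded hε' fun i => hTε i i.2 z hz)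
  exact (hsum.sum_add_tsum_subtype_compl F).symm

lemma samePrincipalPartAt_tsum {Z : Set ℂ} (hZD : Z ⊆ D) {T : Z → ℂ → ℂ}
    (hT : ∀ a, AnalyticOnNhd ℂ (T a) (D \ {↑a})) {ε : Z → ℝ} (hε : Summable ε)
    (hTε : ∀ z₀ ∈ D, ∃ U ⊆ D, IsOpen U ∧ z₀ ∈ U ∧
      ∃ F : Finset Z, ∀ a ∉ F, ↑a ∉ U ∧ ∀ z ∈ U, ‖T a z‖ ≤ ε a) :
    AnalyticOnNhd ℂ (fun z => ∑' a, T a z) (D \ Z) ∧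
      ∀ a : Z, SamePrincipalPartAt (fun z => ∑' b, T b z) (T a) a := by
  have hsplit : ∀ z₀ ∈ D, ∃ F : Finset Z, (∀ a : Z, ↑a = z₀ → a ∈ F) ∧
      ∃ v : ℂ → ℂ, AnalyticAt ℂ v z₀ ∧
        (fun z => ∑' a, T a z) =ᶠ[𝓝 z₀] (fun z => ∑ a ∈ F, T a z) + v := fun z₀ hz₀ => by
    obtain ⟨U, hUD, hU, hz₀U, F, hF⟩ := hTε z₀ hz₀
    refine ⟨F, fun a haz₀ => by_contra fun ha => (hF a ha).1 (haz₀ ▸ hz₀U),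
      exists_tsum_eventuallyEq_sum_add hε hU hz₀U F (fun a ha => ?_) fun a ha => (hF a ha).2⟩
    exact (hT a).differentiableOn.mono fun z hz =>
      ⟨hUD hz, ne_of_mem_of_not_mem hz (hF a ha).1⟩
  refine ⟨fun z₀ hz₀ => ?_, fun a => ?_⟩
  · obtain ⟨F, -, v, hv, hsum⟩ := hsplit z₀ hz₀.1
    have hF : AnalyticAt ℂ (fun z => ∑ a ∈ F, T a z) z₀ := F.analyticAt_fun_sum fun a _ =>
      hT a z₀ ⟨hz₀.1, (ne_of_mem_of_not_mem a.2 hz₀.2).symm⟩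
    exact (hF.add hv).congr hsum.symm
  · obtain ⟨F, haF, v, hv, hsum⟩ := hsplit a (hZD a.2)
    have hF : AnalyticAt ℂ (fun z => ∑ b ∈ F.erase a, T b z) a :=
      (F.erase a).analyticAt_fun_sum fun b hb =>
        hT b a ⟨hZD a.2, fun h => Finset.ne_of_mem_erase hb (Subtype.ext h.symm)⟩
    refine ⟨_, hF.add hv, ?_⟩
    filter_upwards [hsum.filter_mono nhdsWithin_le_nhds] with z hz
    simp only [hz, Pi.add_apply, ← Finset.add_sum_erase F _ (haF a rfl), add_assoc]

theorem exists_analyticOnNhd_samePrincipalPartAt (hD : IsOpen D) {Z : Set ℂ} (hZD : Z ⊆ D)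
    (hZ : Zᶜ ∈ codiscreteWithin D) {m : ℂ → ℂ → ℂ} (hm : ∀ a ∈ Z, MeromorphicAt (m a) a) :
    ∃ u : ℂ → ℂ, AnalyticOnNhd ℂ u (D \ Z) ∧ ∀ a ∈ Z, SamePrincipalPartAt u (m a) a := by
  obtain ⟨L, hL, hlocal⟩ := exists_rungeApproximable_eval_inv_sub_region hD
  have hcount : Z.Countable :=
    (HereditarilyLindelofSpace.isLindelof Z).countable_of_isDiscrete <| by
      simpa only [inter_self] using
        isDiscrete_of_codiscreteWithin (codiscreteWithin_mono hZD hZ)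
  obtain ⟨ε, hε_pos, _, hε, -⟩ := hcount.exists_pos_hasSum_le one_pos
  choose T hT hTm hTε using fun a : Z =>
    exists_samePrincipalPartAt_norm_le (hL a (hZD a.2)) (hZD a.2) (hm a a.2) (hε_pos a)
  have hbound : ∀ z₀ ∈ D, ∃ U ⊆ D, IsOpen U ∧ z₀ ∈ U ∧
      ∃ F : Finset Z, ∀ a ∉ F, ↑a ∉ U ∧ ∀ z ∈ U, ‖T a z‖ ≤ ε a := fun z₀ hz₀ => by
    obtain ⟨U, hUD, hU, hz₀U, K, hKD, hK, hKU⟩ := hlocal z₀ hz₀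
    have hfin : {a : Z | ↑a ∈ K}.Finite :=
      ((hK.finite_sdiff_of_mem_codiscreteWithin (codiscreteWithin_mono hKD hZ)).preimage
        Subtype.val_injective.injOn).subset fun a ha => ⟨ha, not_not_intro a.2⟩
    refine ⟨U, hUD, hU, hz₀U, hfin.toFinset, fun a ha => ?_⟩
    obtain ⟨haU, hUL⟩ := hKU a ⟨hZD a.2, by simpa using ha⟩
    exact ⟨haU, fun z hz => hTε a z (hUL hz)⟩
  obtain ⟨hu, hup⟩ := samePrincipalPartAt_tsum hZD hT hε.summable hbound
  exact ⟨_, hu, fun a ha => (hup ⟨a, ha⟩).trans (hTm ⟨a, ha⟩)⟩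

end MittagLeffler

section Bezout

variable {D : Set ℂ} {F : ℂ → ℂ}

lemma exists_samePrincipalPartAt_div (hD : IsOpen D) (hF : AnalyticOnNhd ℂ F D) {b : ℂ → ℂ}
    (hb : ∀ a ∈ D, F a = 0 → AnalyticAt ℂ b a) :
    ∃ u : ℂ → ℂ, (∀ a ∈ D, F a ≠ 0 → AnalyticAt ℂ u a) ∧
      ∀ a ∈ D, F a = 0 → (∀ᶠ z in 𝓝[≠] a, F z ≠ 0) → SamePrincipalPartAt u (b / F) a := by
  have hZ : (D ∩ {a | F a = 0 ∧ ∀ᶠ z in 𝓝[≠] a, F z ≠ 0})ᶜ ∈ codiscreteWithin D :=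
    mem_of_superset (compl_isolatedZeros_mem_codiscreteWithin hF)
      (compl_subset_compl.2 inter_subset_right)
  obtain ⟨u, hu, huZ⟩ := exists_analyticOnNhd_samePrincipalPartAt hD inter_subset_left hZ
    (m := fun _ => b / F) fun a ha =>
      (hb a ha.1 ha.2.1).meromorphicAt.div (hF a ha.1).meromorphicAt
  exact ⟨u, fun a ha hFa => hu a ⟨ha, fun h => hFa h.2.1⟩,
    fun a ha hFa h0 => huZ a ⟨ha, hFa, h0⟩⟩

theorem exists_analyticOnNhd_eventuallyEq_add_mul (hD : IsOpen D) (hF : AnalyticOnNhd ℂ F D)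
    {b : ℂ → ℂ} (hb : ∀ a ∈ D, F a = 0 → AnalyticAt ℂ b a) :
    ∃ B : ℂ → ℂ, AnalyticOnNhd ℂ B D ∧ ∀ a ∈ D, F a = 0 →
      ∃ ψ : ℂ → ℂ, AnalyticAt ℂ ψ a ∧ B =ᶠ[𝓝 a] b + F * ψ := by
  classical
  obtain ⟨u, hu, hub⟩ := exists_samePrincipalPartAt_div hD hF hb
  let G : ℂ → ℂ := fun z => if F z = 0 then b z else F z * u z
  have hG : ∀ a ∈ D, F a = 0 → ∃ ψ : ℂ → ℂ, AnalyticAt ℂ ψ a ∧ G =ᶠ[𝓝[≠] a] b + F * ψ := by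
    intro a ha hFa
    rcases (hF a ha).eventually_eq_zero_or_eventually_ne_zero with h0 | h0
    · refine ⟨0, analyticAt_const, .filter_mono ?_ nhdsWithin_le_nhds⟩
      filter_upwards [h0] with z hz
      simp [G, hz]
    · obtain ⟨ψ, hψ, huψ⟩ := hub a ha hFa h0
      refine ⟨ψ, hψ, ?_⟩
      filter_upwards [huψ, h0] with z hz hFz
      simp [G, hFz, hz, mul_add, mul_div_cancel₀]
  obtain ⟨B, hB, hBG⟩ := exists_analyticOnNhd_eventuallyEq (D := D) (G := G) fun a ha => by
    by_cases hFa : F a = 0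
    · obtain ⟨ψ, hψ, hGψ⟩ := hG a ha hFa
      exact ⟨_, (hb a ha hFa).add ((hF a ha).mul hψ), hGψ⟩
    · refine ⟨F * u, (hF a ha).mul (hu a ha hFa), .filter_mono ?_ nhdsWithin_le_nhds⟩
      filter_upwards [(hF a ha).continuousAt.eventually_ne hFa] with z hz
      simp [G, hz]
  refine ⟨B, hB, fun a ha hFa => ?_⟩
  obtain ⟨ψ, hψ, hGψ⟩ := hG a ha hFa
  have hBψ : AnalyticAt ℂ (b + F * ψ) a := (hb a ha hFa).add ((hF a ha).mul hψ)
  exact ⟨ψ, hψ, ((hB a ha).frequently_eq_iff_eventually_eq hBψ).1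
    ((hBG a ha).trans hGψ).frequently⟩

theorem exists_mul_add_mul_eqOn_one (hD : IsOpen D) (hF : AnalyticOnNhd ℂ F D) {p : ℂ → ℂ}
    (hp : AnalyticOnNhd ℂ p D) (hFp : ∀ a ∈ D, F a = 0 → p a ≠ 0) :
    ∃ A B : ℂ → ℂ, AnalyticOnNhd ℂ A D ∧ AnalyticOnNhd ℂ B D ∧ EqOn (A * F + B * p) 1 D := by
  obtain ⟨B, hB, hBp⟩ := exists_analyticOnNhd_eventuallyEq_add_mul hD hF (b := p⁻¹)
    fun a ha hFa => (hp a ha).inv (hFp a ha hFa)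
  obtain ⟨A, hA, hFA⟩ := exists_eqOn_mul_of_locally hF (g := 1 - B * p)
    (analyticOnNhd_const.sub (hB.mul hp)) fun a ha hFa => by
      obtain ⟨ψ, hψ, hBψ⟩ := hBp a ha hFa
      refine ⟨-(ψ * p), (hψ.mul (hp a ha)).neg, ?_⟩
      filter_upwards [hBψ, (hp a ha).continuousAt.eventually_ne (hFp a ha hFa)] with z hz hpz
      simp only [Pi.sub_apply, Pi.one_apply, Pi.mul_apply, Pi.neg_apply, hz, Pi.add_apply,
        Pi.inv_apply]
      field_simp
      ring
  refine ⟨A, B, hA, hB, fun z hz => ?_⟩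
  have hA_eq := hFA hz
  simp only [Pi.sub_apply, Pi.one_apply, Pi.mul_apply, Pi.add_apply] at hA_eq ⊢
  linear_combination -hA_eq

end Bezout

section Ideals

variable {D : Set ℂ}

lemma Hol.exists_analyticOnNhd (hD : IsOpen D) (f : Hol D) :
    ∃ F : ℂ → ℂ, AnalyticOnNhd ℂ F D ∧ ∀ z : D, F z = (f : D → ℂ) z :=
  f.2.imp fun _ hF => ⟨hF.1.analyticOnNhd hD, hF.2⟩

theorem Hol.isCoprime_of_disjoint_ZD (hD : IsOpen D) {f p : Hol D} (hfp : Disjoint (ZD f) (ZD p)) :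
    IsCoprime f p := by
  obtain ⟨F, hF, hFf⟩ := Hol.exists_analyticOnNhd hD f
  obtain ⟨P, hP, hPp⟩ := Hol.exists_analyticOnNhd hD p
  obtain ⟨A, B, hA, hB, hAB⟩ := exists_mul_add_mul_eqOn_one hD hF hP fun a ha hFa hPa =>
    hfp.notMem_of_mem_left (a := ⟨a, ha⟩) ((hFf ⟨a, ha⟩).symm.trans hFa)
      ((hPp ⟨a, ha⟩).symm.trans hPa)
  refine ⟨⟨fun z => A z, A, hA.differentiableOn, fun _ => rfl⟩,
    ⟨fun z => B z, B, hB.differentiableOn, fun _ => rfl⟩, Subtype.ext <| funext fun z => ?_⟩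
  simpa [hFf, hPp] using hAB z.2

theorem mem_of_zeroSet_subset_general (hD : IsOpen D) {f h : Hol D} (hZ : ZD f ⊆ ZD h) :
    h ∈ (Ideal.span {f}).jacobson := by
  refine Ideal.mem_jacobson_iff.2 fun y => ?_
  have hdisj : Disjoint (ZD f) (ZD (y * h + 1)) := disjoint_left.2 fun z hfz hz => by
    have hhz : (h : D → ℂ) z = 0 := hZ hfz
    simp [ZD, hhz] at hz
  obtain ⟨A, B, hAB⟩ := Hol.isCoprime_of_disjoint_ZD hD hdisj
  refine ⟨B, Ideal.mem_span_singleton'.2 ⟨-A, ?_⟩⟩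
  linear_combination -hAB

end Ideals

/-- Let `D` be a domain in `ℂ` and `M` a maximal ideal of `H(D)`. If `f ∈ M` and `h ∈ H(D)`
is such that `Z_D(f) ⊆ Z_D(h)` (zero sets, disregarding multiplicities), then `h ∈ M`. -/
theorem mem_of_zeroSet_subset {D : Set ℂ} (hD : IsOpen D) (hDconn : IsConnected D)
    (M : Ideal (Hol D)) (hM : M.IsMaximal)
    (f : Hol D) (hf : f ∈ M) (h : Hol D) (hZ : ZD f ⊆ ZD h) :
    h ∈ M := by
  have hfM : Ideal.span {f} ≤ M := (Ideal.span_singleton_le_iff_mem M).2 hf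
  exact Ideal.jacobson_eq_self_of_isMaximal (H := hM) ▸
    Ideal.jacobson_mono hfM (mem_of_zeroSet_subset_general hD hZ)
end

section
/- Let D be a domain in ℂ and let M be a free maximal ideal of H(D). Suppose f ∈ M, f ≠ 0, and the orders of the zeros of f tend to infinity, meaning: for every n ∈ ℕ there exists a finite subset K of Z_D(f) such that ord(f,ζ) > n for all ζ ∈ Z_D(f) \ K. Then f ∈ ki(M) := ⋂_{n=1}^∞ Mⁿ. -/
set_option synthInstance.maxHeartbeats 400000
set_option maxHeartbeats 800000

/-!
For `n ≥ 1` the Weierstrass product theorem yields `g ∈ H(D)` with `ord(g, ζ) = ⌊ord(f, ζ) / n⌋`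
for all `ζ`, so that `gⁿ` divides `f`. An order `k ≥ n` satisfies `k ≤ 2n ⌊k / n⌋`; so if `K` is a
finite set containing all zeros of `f` of order below `n`, then `f` divides
`g²ⁿ ∏_{κ ∈ K} (z - κ)ⁿ`. Since the ideal `I` containing `f` is free, each `z - κ` is a unit
modulo `I`: some `h ∈ I` has `h(κ) ≠ 0`, and `z - κ` divides `h - h(κ)`. Hence `g²ⁿ ∈ I`, so
`g ∈ I` as soon as `I` is radical, and then `f ∈ Iⁿ`.
-/

open Filter Topology Metric Set

section CompactCore

variable {E : Type*} [SeminormedAddCommGroup E]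

/-- The points of `D` of norm at most `r` and at distance at least `r⁻¹` from the complement of
`D`. As `r → ∞` these sets form the standard exhaustion of an open set by compact sets. -/
def compactCore (D : Set E) (r : ℝ) : Set E :=
  closedBall 0 r \ thickening r⁻¹ Dᶜ

lemma mem_compactCore {D : Set E} {r : ℝ} {z : E} :
    z ∈ compactCore D r ↔ ‖z‖ ≤ r ∧ ∀ γ ∉ D, r⁻¹ ≤ dist z γ := by
  simp [compactCore, mem_thickening_iff]

lemma isCompact_compactCore [ProperSpace E] (D : Set E) (r : ℝ) : IsCompact (compactCore D r) :=
  (isCompact_closedBall 0 r).diff isOpen_thickening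

lemma compactCore_subset (D : Set E) {r : ℝ} (hr : 0 < r) : compactCore D r ⊆ D := by
  rintro z ⟨-, hz⟩
  by_contra hzD
  exact hz (self_subset_thickening (inv_pos.2 hr) _ hzD)

lemma exists_subset_compactCore {C D : Set E} (hC : IsCompact C) (hD : IsOpen D)
    (hCD : C ⊆ D) : ∃ r > 0, C ⊆ compactCore D r := by
  obtain ⟨δ, hδ, hδD⟩ := hC.exists_thickening_subset_open hD hCD
  obtain ⟨R, -, hR⟩ := hC.isBounded.exists_pos_norm_le
  refine ⟨max R δ⁻¹, lt_max_of_lt_right (inv_pos.2 hδ), fun z hz => mem_compactCore.2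
    ⟨(hR z hz).trans (le_max_left _ _), fun γ hγ => ?_⟩⟩
  calc (max R δ⁻¹)⁻¹ ≤ δ := inv_le_of_inv_le₀ hδ (le_max_right _ _)
    _ ≤ dist z γ := by
      by_contra! h
      exact hγ (hδD (mem_thickening_iff.2 ⟨z, hz, dist_comm z γ ▸ h⟩))

lemma dist_le_inv_of_notMem_compactCore {D : Set E} {r : ℝ} (hr : 0 < r) {α β : E}
    (hα : α ∉ compactCore D r) (hβ : ∀ γ ∉ D, dist α β ≤ dist α γ) (hαβ : ‖α‖ * dist α β ≤ 1) :
    dist α β ≤ r⁻¹ := by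
  by_contra! hlt
  refine hα (mem_compactCore.2 ⟨?_, fun γ hγ => hlt.le.trans (hβ γ hγ)⟩)
  rw [← div_le_one₀ hr, div_eq_mul_inv]
  calc ‖α‖ * r⁻¹ ≤ ‖α‖ * dist α β := by gcongr
    _ ≤ 1 := hαβ

lemma le_norm_of_notMem_compactCore {D : Set E} {r : ℝ} (hr : 0 < r) {α : E}
    (hα : α ∉ compactCore D r) (hD : ∀ γ ∉ D, 1 ≤ ‖α‖ * dist α γ) : r ≤ ‖α‖ := by
  by_contra! hlt
  refine hα (mem_compactCore.2 ⟨hlt.le, fun γ hγ => ?_⟩)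
  rw [inv_le_iff_one_le_mul₀ hr]
  calc 1 ≤ ‖α‖ * dist α γ := hD γ hγ
    _ ≤ dist α γ * r := by rw [mul_comm]; gcongr

end CompactCore

section WeierstrassFactor

lemma norm_log_one_sub_sub_logTaylor_le (p : ℕ) {u : ℂ} (hu : ‖u‖ ≤ 1 / 2) :
    ‖Complex.log (1 - u) - Complex.logTaylor (p + 1) (-u)‖ ≤ (1 / 2 : ℝ) ^ p := by
  have hinv : (1 - ‖u‖)⁻¹ ≤ 2 := inv_le_of_inv_le₀ two_pos (by linarith)
  have hinv_nonneg : 0 ≤ (1 - ‖u‖)⁻¹ := inv_nonneg.2 (by linarith)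
  calc ‖Complex.log (1 - u) - Complex.logTaylor (p + 1) (-u)‖
      ≤ ‖u‖ ^ (p + 1) * (1 - ‖u‖)⁻¹ / (p + 1) := by
        simpa [sub_eq_add_neg] using
          Complex.norm_log_sub_logTaylor_le p (z := -u) (by rw [norm_neg]; linarith)
    _ ≤ ‖u‖ ^ (p + 1) * (1 - ‖u‖)⁻¹ := div_le_self (by positivity) (by simp)
    _ ≤ (1 / 2) ^ (p + 1) * 2 := by gcongr
    _ = (1 / 2) ^ p := by ring

lemma exists_norm_one_sub_mul_exp_pow_sub_one_le (m : ℕ) {ε : ℝ} (hε : 0 < ε) :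
    ∃ q : ℂ → ℂ, Differentiable ℂ q ∧
      ∀ u : ℂ, ‖u‖ ≤ 1 / 2 → ‖((1 - u) * Complex.exp (q u)) ^ m - 1‖ ≤ ε := by
  have htendsto : Tendsto (fun p : ℕ => (m : ℝ) * (1 / 2) ^ p) atTop (𝓝 0) := by
    simpa using (tendsto_pow_atTop_nhds_zero_of_lt_one (r := (1 / 2 : ℝ))
      (by norm_num) (by norm_num)).const_mul (m : ℝ)
  obtain ⟨p, hp⟩ := (htendsto.eventually_le_const
    (show (0 : ℝ) < min 1 (ε / 2) by positivity)).exists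
  refine ⟨fun u => -Complex.logTaylor (p + 1) (-u), by unfold Complex.logTaylor; fun_prop, ?_⟩
  intro u hu
  set L := Complex.log (1 - u) - Complex.logTaylor (p + 1) (-u) with hL
  have hu1 : 1 - u ≠ 0 := sub_ne_zero.2 <| by
    rintro rfl
    norm_num at hu
  have hexp : ((1 - u) * Complex.exp (-Complex.logTaylor (p + 1) (-u))) ^ m
      = Complex.exp (m * L) := by
    rw [Complex.exp_nat_mul, hL, sub_eq_add_neg (Complex.log _), Complex.exp_add,
      Complex.exp_log hu1]
  have hmL : ‖(m : ℂ) * L‖ ≤ min 1 (ε / 2) := by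
    rw [norm_mul, Complex.norm_natCast]
    exact (mul_le_mul_of_nonneg_left (norm_log_one_sub_sub_logTaylor_le p hu)
      m.cast_nonneg).trans hp
  calc ‖((1 - u) * Complex.exp (-Complex.logTaylor (p + 1) (-u))) ^ m - 1‖
      = ‖Complex.exp (m * L) - 1‖ := by rw [hexp]
    _ ≤ 2 * ‖(m : ℂ) * L‖ := Complex.norm_exp_sub_one_le (hmL.trans (min_le_left _ _))
    _ ≤ 2 * (ε / 2) := by gcongr; exact hmL.trans (min_le_right _ _)
    _ = ε := by ring

variable {D : Set ℂ}

-- If `‖α‖ dist(α, Dᶜ) < 1`, the function `(α - β) / (z - β)` works for the point `β ∉ D` nearest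
-- to `α`; otherwise `z / α` does, or `1 - z` if `α = 0`.
lemma exists_norm_le_half_on_compactCore (hD : IsOpen D) (α : ℂ) :
    ∃ u v : ℂ → ℂ, DifferentiableOn ℂ u D ∧ DifferentiableOn ℂ v D ∧ (∀ z ∈ D, v z ≠ 0) ∧
      (∀ z ∈ D, 1 - u z = (z - α) * v z) ∧
      ∀ r > 0, α ∉ compactCore D (2 * r) → ∀ z ∈ compactCore D r, ‖u z‖ ≤ 1 / 2 := by
  by_cases hnear : ∃ γ ∉ D, ‖α‖ * dist α γ < 1
  · obtain ⟨γ, hγ, hγα⟩ := hnear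
    obtain ⟨β, hβ, hβα⟩ := hD.isClosed_compl.exists_infDist_eq_dist ⟨γ, hγ⟩ α
    have hmin (γ) (hγ : γ ∉ D) : dist α β ≤ dist α γ :=
      hβα ▸ infDist_le_dist_of_mem (s := Dᶜ) hγ
    have hαβ : ‖α‖ * dist α β ≤ 1 :=
      (mul_le_mul_of_nonneg_left (hmin γ hγ) (norm_nonneg α)).trans hγα.le
    have hne (z) (hz : z ∈ D) : z - β ≠ 0 := sub_ne_zero.2 fun h => hβ (h ▸ hz)
    refine ⟨fun z => (α - β) / (z - β), fun z => (z - β)⁻¹, by fun_prop (disch := assumption),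
      by fun_prop (disch := assumption), fun z hz => inv_ne_zero (hne z hz), fun z hz => ?_,
      fun r hr hα z hz => ?_⟩
    · field_simp [hne z hz]
      ring
    have hzβ : r⁻¹ ≤ dist z β := (mem_compactCore.1 hz).2 β hβ
    calc ‖(α - β) / (z - β)‖ = dist α β / dist z β := by rw [norm_div, dist_eq_norm, dist_eq_norm]
      _ ≤ (2 * r)⁻¹ / r⁻¹ := by
        gcongr
        exact dist_le_inv_of_notMem_compactCore (by positivity) hα hmin hαβ
      _ = 1 / 2 := by field_simp
  push Not at hnear
  have hnorm (r : ℝ) (hr : 0 < r) (hα : α ∉ compactCore D (2 * r)) : 2 * r ≤ ‖α‖ :=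
    le_norm_of_notMem_compactCore (by positivity) hα hnear
  by_cases hα0 : α = 0
  · refine ⟨fun z => 1 - z, fun _ => 1, by fun_prop, by fun_prop, by simp, by simp [hα0], ?_⟩
    exact fun r hr hα => absurd (hnorm r hr hα) (by simpa [hα0] using hr)
  · refine ⟨fun z => z / α, fun _ => -α⁻¹, by fun_prop, by fun_prop, by simp [hα0],
      fun z _ => by field_simp; ring, fun r hr hα z hz => ?_⟩
    calc ‖z / α‖ = ‖z‖ / ‖α‖ := norm_div z α
      _ ≤ r / (2 * r) := by
        gcongr
        · exact (mem_compactCore.1 hz).1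
        · exact hnorm r hr hα
      _ = 1 / 2 := by field_simp

lemma exists_weierstrassFactor (hD : IsOpen D) (α : ℂ) (m : ℕ) {ε : ℝ} (hε : 0 < ε) :
    ∃ E : ℂ → ℂ, DifferentiableOn ℂ E D ∧ (α ∈ D → analyticOrderAt E α = m) ∧
      (∀ z ∈ D, z ≠ α → E z ≠ 0) ∧
      ∀ r > 0, α ∉ compactCore D (2 * r) → ∀ z ∈ compactCore D r, ‖E z - 1‖ ≤ ε := by
  obtain ⟨u, v, hu, hv, hv0, huv, hbound⟩ := exists_norm_le_half_on_compactCore hD α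
  obtain ⟨q, hq, hqε⟩ := exists_norm_one_sub_mul_exp_pow_sub_one_le m hε
  let w (z : ℂ) : ℂ := (v z * Complex.exp (q (u z))) ^ m
  have hw : DifferentiableOn ℂ w D := (hv.mul (hq.comp_differentiableOn hu).cexp).pow m
  have hw0 (z) (hz : z ∈ D) : w z ≠ 0 :=
    pow_ne_zero _ (mul_ne_zero (hv0 z hz) (Complex.exp_ne_zero _))
  have hfactor (z) (hz : z ∈ D) :
      ((1 - u z) * Complex.exp (q (u z))) ^ m = (z - α) ^ m * w z := by
    rw [huv z hz, mul_assoc, mul_pow]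
  refine ⟨fun z => ((1 - u z) * Complex.exp (q (u z))) ^ m,
    ((hu.const_sub 1).mul (hq.comp_differentiableOn hu).cexp).pow m, fun hα => ?_,
    fun z hz hzα => ?_, fun r hr hα z hz => hqε _ (hbound r hr hα z hz)⟩
  · have hDα := hD.mem_nhds hα
    rw [analyticOrderAt_congr (eventually_of_mem hDα hfactor),
      AnalyticAt.analyticOrderAt_eq_natCast (by have := hw.analyticAt hDα; fun_prop)]
    exact ⟨w, hw.analyticAt hDα, hw0 α hα, .of_forall fun z => rfl⟩
  · simp only [hfactor z hz]
    exact mul_ne_zero (pow_ne_zero _ (sub_ne_zero.2 hzα)) (hw0 z hz)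

end WeierstrassFactor

section NormallyConvergentProduct

variable {ι : Type*} {D : Set ℂ} {F : ι → ℂ → ℂ} {ε : ι → ℝ}

lemma hasProdLocallyUniformlyOn_tprod (hD : IsOpen D) (hε : Summable ε)
    (hF : ∀ i, DifferentiableOn ℂ (F i) D)
    (hFε : ∀ C ⊆ D, IsCompact C → ∀ᶠ i in cofinite, ∀ z ∈ C, ‖F i z - 1‖ ≤ ε i) :
    HasProdLocallyUniformlyOn F (fun z => ∏' i, F i z) D := by
  refine hasProdLocallyUniformlyOn_of_forall_compact hD fun C hCD hC => ?_
  simpa using Summable.hasProdUniformlyOn_one_add (f := fun i z => F i z - 1) hC hε (hFε C hCD hC)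
    fun i => ((hF i).continuousOn.mono hCD).sub continuousOn_const

lemma differentiableOn_tprod (hD : IsOpen D) (hε : Summable ε)
    (hF : ∀ i, DifferentiableOn ℂ (F i) D)
    (hFε : ∀ C ⊆ D, IsCompact C → ∀ᶠ i in cofinite, ∀ z ∈ C, ‖F i z - 1‖ ≤ ε i) :
    DifferentiableOn ℂ (fun z => ∏' i, F i z) D :=
  (hasProdLocallyUniformlyOn_tprod hD hε hF hFε).differentiableOn
    (.of_forall fun _ => DifferentiableOn.fun_finsetProd fun i _ => hF i) hD

lemma tprod_ne_zero_of_norm_sub_one_le {R : Type*} [NormedCommRing R] [NormOneClass R]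
    [NormMulClass R] [CompleteSpace R] {a : ι → R} (hε : Summable ε)
    (haε : ∀ᶠ i in cofinite, ‖a i - 1‖ ≤ ε i) (ha : ∀ i, a i ≠ 0) : ∏' i, a i ≠ 0 := by
  have hsum : Summable fun i => ‖a i - 1‖ :=
    hε.of_norm_bounded_eventually (by simpa using haε)
  simpa using tprod_one_add_ne_zero_of_summable (f := fun i => a i - 1) (by simpa using ha) hsum

lemma analyticOrderAt_tprod_eq (hD : IsOpen D) (hε : Summable ε)
    (hF : ∀ i, DifferentiableOn ℂ (F i) D)
    (hFε : ∀ C ⊆ D, IsCompact C → ∀ᶠ i in cofinite, ∀ z ∈ C, ‖F i z - 1‖ ≤ ε i)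
    {ζ : ℂ} (hζ : ζ ∈ D) (i₀ : ι) (hi₀ : ∀ i ≠ i₀, F i ζ ≠ 0) :
    analyticOrderAt (fun z => ∏' i, F i z) ζ = analyticOrderAt (F i₀) ζ := by
  classical
  let P (i : ι) (z : ℂ) : ℂ := if i = i₀ then 1 else F i z
  have hP (i) : DifferentiableOn ℂ (P i) D := by
    rcases eq_or_ne i i₀ with rfl | hi
    · simp [P]
    · simpa [P, hi] using hF i
  have hPε (C) (hCD : C ⊆ D) (hC : IsCompact C) :
      ∀ᶠ i in cofinite, ∀ z ∈ C, ‖P i z - 1‖ ≤ ε i := by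
    filter_upwards [hFε C hCD hC, (finite_singleton i₀).compl_mem_cofinite] with i hi hii₀
    simpa [P, show i ≠ i₀ from hii₀] using hi
  have hP0 : ∏' i, P i ζ ≠ 0 := by
    refine tprod_ne_zero_of_norm_sub_one_le hε
      (by simpa using hPε {ζ} (by simpa using hζ) isCompact_singleton) fun i => ?_
    rcases eq_or_ne i i₀ with rfl | hi
    · simp [P]
    · simpa [P, hi] using hi₀ i hi
  have hsplit (z) (hz : z ∈ D) : ∏' i, F i z = F i₀ z * ∏' i, P i z := by
    have hupdate : Function.update (fun i => F i z) i₀ 1 = fun i => P i z := by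
      ext i
      simp only [Function.update_apply, P]
    have hmult := ((hasProdLocallyUniformlyOn_tprod hD hε hP hPε).hasProd hz).multipliable
    exact Multipliable.tprod_eq_mul_tprod_ite' i₀ (hupdate ▸ hmult)
  have hDζ := hD.mem_nhds hζ
  have hPan : AnalyticAt ℂ (fun z => ∏' i, P i z) ζ :=
    (differentiableOn_tprod hD hε hP hPε).analyticAt hDζ
  rw [analyticOrderAt_congr (eventually_of_mem hDζ hsplit), ← Pi.mul_def,
    analyticOrderAt_mul ((hF i₀).analyticAt hDζ) hPan, hPan.analyticOrderAt_eq_zero.2 hP0, add_zero]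

end NormallyConvergentProduct

section Weierstrass

variable {D : Set ℂ}

lemma countable_inter_of_compl_mem_codiscreteWithin {X : Type*} [TopologicalSpace X]
    [SecondCountableTopology X] {S U : Set X} (hS : Sᶜ ∈ codiscreteWithin U) :
    (S ∩ U).Countable := by
  have := (isDiscrete_of_codiscreteWithin hS).to_subtype
  exact countable_coe_iff.1 countable_of_Lindelof_of_discrete

/-- The **Weierstrass product theorem** on an open subset of the plane. -/
theorem exists_differentiableOn_analyticOrderAt_eq (hD : IsOpen D) {m : ℂ → ℕ}
    (hm : {ζ | m ζ = 0} ∈ codiscreteWithin D) :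
    ∃ G : ℂ → ℂ, DifferentiableOn ℂ G D ∧ ∀ ζ ∈ D, analyticOrderAt G ζ = m ζ := by
  let S : Set ℂ := {ζ | m ζ ≠ 0} ∩ D
  have hScount : S.Countable :=
    countable_inter_of_compl_mem_codiscreteWithin (by simpa [compl_ofPred] using hm)
  obtain ⟨ε, hε, _, hεsum, -⟩ := hScount.exists_pos_hasSum_le one_pos
  choose E hE hEord hE0 hEε using fun α : S => exists_weierstrassFactor hD α (m α) (hε α)
  have hEbound (C) (hCD : C ⊆ D) (hC : IsCompact C) :
      ∀ᶠ α in cofinite, ∀ z ∈ C, ‖E α z - 1‖ ≤ ε α := by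
    obtain ⟨r, hr, hCr⟩ := exists_subset_compactCore hC hD hCD
    have hfin : (compactCore D (2 * r) ∩ S).Finite := by
      refine ((isCompact_compactCore D (2 * r)).finite_sdiff_of_mem_codiscreteWithin
        (codiscreteWithin_mono (compactCore_subset D (by positivity)) hm)).subset ?_
      exact fun z hz => ⟨hz.1, hz.2.1⟩
    filter_upwards [(hfin.preimage Subtype.val_injective.injOn).compl_mem_cofinite] with α hα z hz
    exact hEε α r hr (fun hmem => hα ⟨hmem, α.2⟩) z (hCr hz)
  have hGdiff := differentiableOn_tprod hD hεsum.summable hE hEbound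
  refine ⟨_, hGdiff, fun ζ hζ => ?_⟩
  by_cases hζS : ζ ∈ S
  · rw [analyticOrderAt_tprod_eq hD hεsum.summable hE hEbound hζ ⟨ζ, hζS⟩, hEord _ hζ]
    exact fun α hα => hE0 α ζ hζ fun h => hα (Subtype.ext h.symm)
  · have hmζ : m ζ = 0 := by_contra fun h => hζS ⟨h, hζ⟩
    rw [hmζ, Nat.cast_zero, (hGdiff.analyticAt (hD.mem_nhds hζ)).analyticOrderAt_eq_zero]
    refine tprod_ne_zero_of_norm_sub_one_le hεsum.summable
      (by simpa using hEbound {ζ} (by simpa using hζ) isCompact_singleton) fun α => ?_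
    exact hE0 α ζ hζ fun h => hζS (h ▸ α.2)

end Weierstrass

section Division

variable {𝕜 : Type*} [NontriviallyNormedField 𝕜]

lemma meromorphicOrderAt_div_nonneg {f g : 𝕜 → 𝕜} {x : 𝕜} (hf : AnalyticAt 𝕜 f x)
    (hg : AnalyticAt 𝕜 g x) (hfg : analyticOrderAt f x ≤ analyticOrderAt g x) :
    0 ≤ meromorphicOrderAt (g / f) x := by
  rw [meromorphicOrderAt_div hg.meromorphicAt hf.meromorphicAt, hf.meromorphicOrderAt_eq,
    hg.meromorphicOrderAt_eq]
  generalize analyticOrderAt f x = a, analyticOrderAt g x = b at hfg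
  cases b with
  | top => cases a <;> simp
  | coe b =>
    cases a with
    | top => simp at hfg
    | coe a =>
      have hab : (a : ℤ) ≤ b := by exact_mod_cast hfg
      simp only [ENat.map_natCast]
      exact_mod_cast sub_nonneg.2 hab

lemma exists_eqOn_mul_of_analyticOrderAt_le {f g : 𝕜 → 𝕜} {U : Set 𝕜} (hf : AnalyticOnNhd 𝕜 f U)
    (hg : AnalyticOnNhd 𝕜 g U) (hfg : ∀ x ∈ U, analyticOrderAt f x ≤ analyticOrderAt g x) :
    ∃ h : 𝕜 → 𝕜, AnalyticOnNhd 𝕜 h U ∧ EqOn g (f * h) U := by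
  have hmero : MeromorphicOn (g / f) U := hg.meromorphicOn.div hf.meromorphicOn
  have hh : AnalyticOnNhd 𝕜 (toMeromorphicNFOn (g / f) U) U := fun x hx => by
    rw [← (meromorphicNFOn_toMeromorphicNFOn (g / f) U hx).meromorphicOrderAt_nonneg_iff_analyticAt,
      meromorphicOrderAt_toMeromorphicNFOn hmero hx]
    exact meromorphicOrderAt_div_nonneg (hf x hx) (hg x hx) (hfg x hx)
  refine ⟨_, hh, fun x hx => ?_⟩
  have hcancel : g =ᶠ[𝓝[≠] x] f * (g / f) := by
    rcases (hf x hx).eventually_eq_zero_or_eventually_ne_zero with hf0 | hf0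
    · have hg0 : ∀ᶠ z in 𝓝 x, g z = 0 := analyticOrderAt_eq_top.1 <|
        top_le_iff.1 <| (analyticOrderAt_eq_top.2 hf0).ge.trans (hfg x hx)
      filter_upwards [hf0.filter_mono nhdsWithin_le_nhds, hg0.filter_mono nhdsWithin_le_nhds]
        with z hfz hgz
      simp [hfz, hgz]
    · filter_upwards [hf0] with z hfz
      exact (mul_div_cancel₀ (g z) hfz).symm
  have heq : g =ᶠ[𝓝[≠] x] f * toMeromorphicNFOn (g / f) U :=
    hcancel.trans (.mul .rfl (hmero.toMeromorphicNFOn_eq_self_on_nhdsNE hx).symm)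
  exact (((hg x hx).continuousAt.eventuallyEq_nhds_iff_eventuallyEq_nhdsNE
    ((hf x hx).mul (hh x hx)).continuousAt).1 heq).eq_of_nhds

end Division

section AnalyticOrder

lemma eventually_analyticOrderAt_eq_top_iff {𝕜 : Type*} [NontriviallyNormedField 𝕜] {F : 𝕜 → 𝕜}
    {ζ : 𝕜} (hF : AnalyticAt 𝕜 F ζ) :
    ∀ᶠ z in 𝓝 ζ, analyticOrderAt F z = ⊤ ↔ analyticOrderAt F ζ = ⊤ := by
  rcases hF.eventually_eq_zero_or_eventually_ne_zero with h0 | hne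
  · filter_upwards [h0.eventually_nhds] with z hz
    simp [analyticOrderAt_eq_top.2 hz, analyticOrderAt_eq_top.2 h0]
  · filter_upwards [eventually_nhdsWithin_iff.1 hne] with z hz
    rcases eq_or_ne z ζ with rfl | hzζ
    · rfl
    · refine iff_of_false (fun h => ?_) fun h => ?_
      · exact hz hzζ (analyticOrderAt_eq_top.1 h).self_of_nhds
      · obtain ⟨w, hw0, hw⟩ :=
          (((analyticOrderAt_eq_top.1 h).filter_mono nhdsWithin_le_nhds).and hne).exists
        exact hw hw0

end AnalyticOrder

namespace Hol

variable {D : Set ℂ}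

/-- The extension of `f ∈ H(D)` by zero to the whole plane, to which Mathlib's notions for
functions on `ℂ` apply. -/
noncomputable def extend (f : Hol D) : ℂ → ℂ :=
  Function.extend Subtype.val (f : D → ℂ) 0

lemma extend_apply (f : Hol D) (z : D) : extend f z = (f : D → ℂ) z :=
  Subtype.val_injective.extend_apply _ _ z

lemma differentiableOn_extend (f : Hol D) : DifferentiableOn ℂ (extend f) D := by
  obtain ⟨F, hF, hFf⟩ := f.2
  exact hF.congr fun z hz => (extend_apply f ⟨z, hz⟩).trans (hFf ⟨z, hz⟩).symm

/-- The element of `H(D)` given by a function on `ℂ` that is holomorphic on `D`. -/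
def ofDifferentiableOn (F : ℂ → ℂ) (hF : DifferentiableOn ℂ F D) : Hol D :=
  ⟨fun z => F z, F, hF, fun _ => rfl⟩

/-- The function `z - κ`, as an element of `H(D)`. -/
def subConst (κ : ℂ) : Hol D :=
  ofDifferentiableOn (fun z => z - κ) (differentiableOn_id.sub_const κ)

/-- The order `ord(f, ζ)` of `f ∈ H(D)` at `ζ`, equal to `0` if `f ζ ≠ 0` and to `⊤` if `f`
vanishes near `ζ`. -/
noncomputable def ord (f : Hol D) (ζ : D) : ℕ∞ :=
  analyticOrderAt (extend f) ζ

lemma ord_eq_analyticOrderAt (hD : IsOpen D) {f : Hol D} {F : ℂ → ℂ}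
    (hF : ∀ z : D, (f : D → ℂ) z = F z) (ζ : D) : ord f ζ = analyticOrderAt F ζ :=
  analyticOrderAt_congr <| eventually_of_mem (hD.mem_nhds ζ.2) fun z hz =>
    (extend_apply f ⟨z, hz⟩).trans (hF ⟨z, hz⟩)

lemma ord_ofDifferentiableOn (hD : IsOpen D) {F : ℂ → ℂ} (hF : DifferentiableOn ℂ F D) (ζ : D) :
    ord (ofDifferentiableOn F hF) ζ = analyticOrderAt F ζ :=
  ord_eq_analyticOrderAt hD (fun _ => rfl) ζ

lemma analyticAt_extend (hD : IsOpen D) (f : Hol D) (ζ : D) : AnalyticAt ℂ (extend f) ζ :=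
  (differentiableOn_extend f).analyticAt (hD.mem_nhds ζ.2)

lemma ord_ne_zero_iff (hD : IsOpen D) {f : Hol D} {ζ : D} : ord f ζ ≠ 0 ↔ ζ ∈ ZD f := by
  rw [ord, (analyticAt_extend hD f ζ).analyticOrderAt_ne_zero, extend_apply]
  rfl

lemma ord_mul (hD : IsOpen D) (f g : Hol D) (ζ : D) : ord (f * g) ζ = ord f ζ + ord g ζ := by
  have hfg (z : D) : (↑(f * g) : D → ℂ) z = (extend f * extend g) z := by
    rw [Pi.mul_apply, extend_apply, extend_apply]
    rfl
  rw [ord_eq_analyticOrderAt hD hfg,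
    analyticOrderAt_mul (analyticAt_extend hD f ζ) (analyticAt_extend hD g ζ)]
  rfl

lemma ord_one (hD : IsOpen D) (ζ : D) : ord (1 : Hol D) ζ = 0 := by
  by_contra h
  exact one_ne_zero ((ord_ne_zero_iff hD).1 h : (1 : ℂ) = 0)

lemma ord_pow (hD : IsOpen D) (f : Hol D) (n : ℕ) (ζ : D) : ord (f ^ n) ζ = n * ord f ζ := by
  induction n with
  | zero => simp [ord_one hD]
  | succ n ih => rw [pow_succ, ord_mul hD, ih, Nat.cast_add_one, add_one_mul]

lemma ord_subConst_self (hD : IsOpen D) (ζ : D) : ord (subConst ζ) ζ = 1 := by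
  rw [subConst, ord_ofDifferentiableOn hD]
  exact analyticOrderAt_id_sub_const_self

lemma dvd_of_forall_ord_le (hD : IsOpen D) {f g : Hol D} (hfg : ∀ ζ, ord f ζ ≤ ord g ζ) :
    f ∣ g := by
  obtain ⟨h, hh, hfh⟩ := exists_eqOn_mul_of_analyticOrderAt_le
    ((differentiableOn_extend f).analyticOnNhd hD) ((differentiableOn_extend g).analyticOnNhd hD)
    fun ζ hζ => hfg ⟨ζ, hζ⟩
  refine ⟨ofDifferentiableOn h hh.differentiableOn, Subtype.ext <| funext fun z => ?_⟩
  have hz := hfh z.2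
  rw [Pi.mul_apply, extend_apply, extend_apply] at hz
  exact hz

lemma ord_le_of_dvd (hD : IsOpen D) {f g : Hol D} (hfg : f ∣ g) (ζ : D) : ord f ζ ≤ ord g ζ := by
  obtain ⟨h, rfl⟩ := hfg
  rw [ord_mul hD]
  exact le_self_add

lemma le_ord_of_ordGE (hD : IsOpen D) {f : Hol D} {ζ : D} {n : ℕ} (h : ordGE f ζ n) :
    n ≤ ord f ζ := by
  obtain ⟨g, hg⟩ := h
  have hdvd : subConst ζ ^ n ∣ f := ⟨g, Subtype.ext (funext hg)⟩
  simpa [ord_pow hD, ord_subConst_self hD] using ord_le_of_dvd hD hdvd ζ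

lemma exists_ord_eq_ite (hD : IsOpen D) (f : Hol D) :
    ∃ e : Hol D, ∀ ζ, ord e ζ = if ord f ζ = ⊤ then ⊤ else 0 := by
  classical
  let E (z : ℂ) : ℂ := if analyticOrderAt (extend f) z = ⊤ then 0 else 1
  have hE (ζ : D) : E =ᶠ[𝓝 ζ.1] fun _ => E ζ := by
    filter_upwards [eventually_analyticOrderAt_eq_top_iff (analyticAt_extend hD f ζ)] with z hz
    simp only [E, hz]
  have hEdiff : DifferentiableOn ℂ E D := fun z hz =>
    ((hE ⟨z, hz⟩).differentiableAt_iff.2 (by fun_prop)).differentiableWithinAt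
  refine ⟨ofDifferentiableOn E hEdiff, fun ζ => ?_⟩
  have hEζ : E ζ = if ord f ζ = ⊤ then 0 else 1 := rfl
  rw [ord_ofDifferentiableOn hD, analyticOrderAt_congr (hE ζ), hEζ]
  split_ifs
  · simp [analyticOrderAt_eq_top]
  · exact analyticAt_const.analyticOrderAt_eq_zero.2 one_ne_zero

-- The Weierstrass product supplies the finite orders, and the function of `exists_ord_eq_ite`
-- restores the components of `D` on which `f` vanishes identically.
lemma exists_ord_eq_map (hD : IsOpen D) (f : Hol D) {φ : ℕ → ℕ} (hφ : φ 0 = 0) :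
    ∃ g : Hol D, (∀ ζ, ord f ζ = ⊤ → ord g ζ = ⊤) ∧
      ∀ ζ (k : ℕ), ord f ζ = k → ord g ζ = φ k := by
  have hcodisc : {ζ | φ (analyticOrderNatAt (extend f) ζ) = 0} ∈ codiscreteWithin D := by
    filter_upwards [((differentiableOn_extend f).analyticOnNhd
      hD).codiscreteWithin_setOfPred_analyticOrderAt_eq_zero_or_top] with ζ hζ
    rcases hζ with h | h <;> simp [analyticOrderNatAt, h, hφ]
  obtain ⟨G, hG, hGord⟩ := exists_differentiableOn_analyticOrderAt_eq hD hcodisc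
  obtain ⟨e, he⟩ := exists_ord_eq_ite hD f
  refine ⟨ofDifferentiableOn G hG * e, fun ζ hζ => ?_, fun ζ k hζ => ?_⟩
  · simp [ord_mul hD, he, hζ]
  · have hk : analyticOrderNatAt (extend f) ζ = k := by
      rw [analyticOrderNatAt, ← ord, hζ, ENat.toNat_natCast]
    rw [ord_mul hD, he, hζ, if_neg (ENat.natCast_ne_top k), add_zero, ord_ofDifferentiableOn hD,
      hGord ζ ζ.2, hk]

lemma exists_pow_dvd_and_dvd (hD : IsOpen D) {f : Hol D} {n : ℕ} (hn : n ≠ 0) {K : Finset D}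
    (hK : ∀ ζ ∈ ZD f, ζ ∉ K → n ≤ ord f ζ) :
    ∃ g : Hol D, g ^ n ∣ f ∧ f ∣ g ^ (2 * n) * ∏ κ ∈ K, subConst (κ : ℂ) ^ n := by
  obtain ⟨g, hg_top, hg⟩ := exists_ord_eq_map hD f (φ := (· / n)) (Nat.zero_div n)
  refine ⟨g, dvd_of_forall_ord_le hD fun ζ => ?_, dvd_of_forall_ord_le hD fun ζ => ?_⟩
  · rw [ord_pow hD]
    cases hk : ord f ζ with
    | top => exact le_top
    | coe k =>
      rw [hg ζ k hk]
      exact_mod_cast Nat.mul_div_le k n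
  · rw [ord_mul hD, ord_pow hD]
    cases hk : ord f ζ with
    | top => simp [hg_top ζ hk, hn]
    | coe k =>
      rw [hg ζ k hk]
      have hdiv : k ≤ n * (k / n) + n := (Nat.lt_mul_div_succ k (Nat.pos_of_ne_zero hn)).le
      by_cases hζ : ζ ∈ K
      · have hprod : (n : ℕ∞) ≤ ord (∏ κ ∈ K, subConst (κ : ℂ) ^ n) ζ := by
          simpa [ord_pow hD, ord_subConst_self hD] using
            ord_le_of_dvd hD (Finset.dvd_prod_of_mem (fun κ : D => subConst (κ : ℂ) ^ n) hζ) ζ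
        refine le_trans ?_ (add_le_add_right hprod _)
        norm_cast
        linarith [Nat.zero_le (n * (k / n))]
      · refine le_trans ?_ le_self_add
        norm_cast
        rcases eq_or_ne k 0 with rfl | hk0
        · exact Nat.zero_le _
        have hnk : n ≤ k := by
          have hle := hK ζ ((ord_ne_zero_iff hD).1 (by rw [hk]; exact_mod_cast hk0)) hζ
          rw [hk] at hle
          exact_mod_cast hle
        linarith [Nat.le_mul_of_pos_right n (Nat.div_pos hnk (Nat.pos_of_ne_zero hn))]

lemma subConst_dvd_sub_algebraMap (hD : IsOpen D) (g : Hol D) (κ : D) :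
    subConst κ ∣ g - algebraMap ℂ (Hol D) ((g : D → ℂ) κ) := by
  have hdslope : DifferentiableOn ℂ (dslope (extend g) κ) D :=
    (Complex.differentiableOn_dslope (hD.mem_nhds κ.2)).2 (differentiableOn_extend g)
  refine ⟨ofDifferentiableOn _ hdslope, Subtype.ext <| funext fun z => ?_⟩
  have hz := (sub_smul_dslope (extend g) (κ : ℂ) z).symm
  rw [extend_apply, extend_apply] at hz
  exact hz

lemma isUnit_mk_subConst (hD : IsOpen D) {I : Ideal (Hol D)} {κ : D}
    (hκ : ∃ g ∈ I, κ ∉ ZD g) : IsUnit (Ideal.Quotient.mk I (subConst κ)) := by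
  obtain ⟨g, hgI, hgκ⟩ := hκ
  obtain ⟨h, hh⟩ := subConst_dvd_sub_algebraMap hD g κ
  have hconst : IsUnit (Ideal.Quotient.mk I (-algebraMap ℂ (Hol D) ((g : D → ℂ) κ))) :=
    (((IsUnit.mk0 _ hgκ).map (algebraMap ℂ (Hol D))).neg).map _
  refine isUnit_of_dvd_unit ⟨Ideal.Quotient.mk I h, ?_⟩ hconst
  rw [← map_mul, ← hh, map_sub, Ideal.Quotient.eq_zero_iff_mem.2 hgI, zero_sub, map_neg]

lemma mem_pow_of_forall_le_ord (hD : IsOpen D) {I : Ideal (Hol D)} (hI : I.IsRadical)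
    (hfree : (⋂ g ∈ I, ZD g) = ∅) {f : Hol D} (hf : f ∈ I) {n : ℕ} (hn : n ≠ 0) {K : Finset D}
    (hK : ∀ ζ ∈ ZD f, ζ ∉ K → n ≤ ord f ζ) : f ∈ I ^ n := by
  obtain ⟨g, hgf, hfg⟩ := exists_pow_dvd_and_dvd hD hn hK
  have hunit : IsUnit (Ideal.Quotient.mk I (∏ κ ∈ K, subConst (κ : ℂ) ^ n)) := by
    simp only [map_prod, map_pow, IsUnit.prod_iff]
    refine fun κ _ => (isUnit_mk_subConst hD ?_).pow n
    simpa using (hfree.symm ▸ notMem_empty κ : κ ∉ ⋂ g ∈ I, ZD g)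
  have hgI : g ^ (2 * n) ∈ I := by
    rw [← Ideal.Quotient.eq_zero_iff_mem, ← hunit.mul_left_eq_zero, ← map_mul,
      Ideal.Quotient.eq_zero_iff_mem]
    exact I.mem_of_dvd hfg hf
  exact (I ^ n).mem_of_dvd hgf (Ideal.pow_mem_pow (hI ⟨2 * n, hgI⟩) n)

end Hol

theorem mem_ki_of_orders_tendsto_infty_general {D : Set ℂ} (hD : IsOpen D)
    (I : Ideal (Hol D)) (hI : I.IsRadical) (hfree : (⋂ g ∈ I, ZD g) = (∅ : Set D))
    (f : Hol D) (hfI : f ∈ I)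
    (hord : ∀ n : ℕ, ∃ K : Set D, K.Finite ∧ ∀ ζ ∈ ZD f \ K, ordGE f ζ (n + 1)) :
    f ∈ ki I := by
  simp only [ki, Ideal.mem_iInf]
  intro n hn
  obtain ⟨m, rfl⟩ := Nat.exists_eq_add_of_le' hn
  obtain ⟨K, hKfin, hK⟩ := hord m
  exact Hol.mem_pow_of_forall_le_ord hD hI hfree hfI m.succ_ne_zero (K := hKfin.toFinset)
    fun ζ hζ hζK => Hol.le_ord_of_ordGE hD (hK ζ ⟨hζ, by simpa using hζK⟩)

/-- Let `D` be a domain in `ℂ`, and `M` a free maximal ideal of `H(D)`. If `f ∈ M`, `f ≠ 0`,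
and the orders of the zeros of `f` tend to infinity (for every `n` there is a finite set
`K ⊆ Z_D(f)` such that `ord(f,ζ) > n` for all `ζ ∈ Z_D(f) \ K`), then
`f ∈ ki(M) = ⋂_{n=1}^∞ Mⁿ`. -/
theorem mem_ki_of_orders_tendsto_infty {D : Set ℂ} (hD : IsOpen D) (hDconn : IsConnected D)
    (M : Ideal (Hol D)) (hM : M.IsMaximal)
    (hfree : (⋂ g ∈ M, ZD g) = (∅ : Set D))
    (f : Hol D) (hfM : f ∈ M) (hf0 : f ≠ 0)
    (hord : ∀ n : ℕ, ∃ K : Set D, K.Finite ∧ K ⊆ ZD f ∧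
      ∀ ζ ∈ ZD f \ K, ordGE f ζ (n + 1)) :
    f ∈ ki M := by
  exact mem_ki_of_orders_tendsto_infty_general hD M hM.isPrime.isRadical hfree f hfM
    fun n => (hord n).imp fun _ hK => ⟨hK.1, hK.2.2⟩
end
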